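/- arXiv:2312.03944 — 2 statements merged into one kernel-verified Lean document; each statement's English description precedes it below -/
import Mathlib

section
/- Let φ be a traveling wave with speed ℓ, normalized so that φ(0) = 1/2, and let (u_n)_{n≥0} be defined by u_0(x) = 1 for x ≥ 0 and u_0(x) = 0 for x < 0, and u_{n+1}(x) = g((q * u_n)(x)) for all n ≥ 0 and x ∈ ℝ. Then there exists x_0 ∈ ℝ such that sup_{x∈ℝ} |u_n(x) − φ(x − nℓ − x_0)| → 0 as n → ∞; consequently, med_n := inf{x : u_n(x) ≥ 1/2} satisfies med_n = nℓ + x_0 + o(1) as n → ∞. -/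
open MeasureTheory Filter Topology

/-- Convolution `(q * u)(x) = ∫ q(y) u(x - y) dy`. -/
noncomputable def conv (q u : ℝ → ℝ) (x : ℝ) : ℝ := ∫ y : ℝ, q y * u (x - y)

/-- The shifted kernel `q_ℓ(x) = q(x + ℓ)`. -/
def qshift (q : ℝ → ℝ) (ℓ : ℝ) (x : ℝ) : ℝ := q (x + ℓ)

/-- The bistable setting: a `C¹` compactly supported probability density `q`, and a
polynomial `P` (the recursion polynomial, i.e. `g` on `[0,1]`) with `P(0) = 0`, `P(1) = 1`,
`0 < P < 1` and `P' > 0` on `(0,1)`; the nonlinearity `f(x) = P(x) - x` has a unique zero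
`θ ∈ (0,1)` and `f'(0) < 0`, `f'(1) < 0` (equivalently `P'(0) < 1`, `P'(1) < 1`). -/
structure BistableSetting where
  q : ℝ → ℝ
  P : Polynomial ℝ
  θ : ℝ
  hq_diff : ContDiff ℝ 1 q
  hq_supp : HasCompactSupport q
  hq_nonneg : ∀ x, 0 ≤ q x
  hq_int : ∫ x : ℝ, q x = 1
  hP0 : P.eval 0 = 0
  hP1 : P.eval 1 = 1
  hP_range : ∀ x ∈ Set.Ioo (0 : ℝ) 1, 0 < P.eval x ∧ P.eval x < 1
  hP_mono : ∀ x ∈ Set.Ioo (0 : ℝ) 1, 0 < (Polynomial.derivative P).eval x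
  hθ_mem : θ ∈ Set.Ioo (0 : ℝ) 1
  hθ_zero : P.eval θ = θ
  hθ_unique : ∀ x ∈ Set.Ioo (0 : ℝ) 1, P.eval x = x → x = θ
  hf'0 : (Polynomial.derivative P).eval 0 < 1
  hf'1 : (Polynomial.derivative P).eval 1 < 1

/-- The nonlinearity `g`, equal to the polynomial `P` on `[0,1]` and extended linearly:
`g(x) = x + f'(0)·x` for `x < 0` and `g(x) = x + f'(1)(x-1)` for `x > 1`. -/
noncomputable def BistableSetting.g (S : BistableSetting) (x : ℝ) : ℝ :=
  if x < 0 then (Polynomial.derivative S.P).eval 0 * x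
  else if x ≤ 1 then S.P.eval x
  else 1 + (Polynomial.derivative S.P).eval 1 * (x - 1)

/-- A traveling wave with speed `ℓ`: a nondecreasing `C¹` function `φ` with
`φ = g(q_ℓ * φ)`, `φ(-∞) = 0` and `φ(+∞) = 1`. -/
structure IsTravelingWave (S : BistableSetting) (ℓ : ℝ) (φ : ℝ → ℝ) : Prop where
  mono : Monotone φ
  smooth : ContDiff ℝ 1 φ
  wave_eq : ∀ x, φ x = S.g (conv (qshift S.q ℓ) φ x)
  limit_bot : Tendsto φ atBot (𝓝 0)
  limit_top : Tendsto φ atTop (𝓝 1)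

/-!
In the frame moving with the wave, `φ` is a stationary front and the step becomes an orbit `v` of
the same recursion with kernel `qshift q ℓ`. Since `g' < 1` at `0` and `1` while `φ' > 0`
everywhere, the functions `φ (x + ξ_j) + β ^ j * ε` with increments `ξ_{j+1} - ξ_j` proportional to
`β ^ j * ε` are supersolutions. Hence, once `v ≤ φ (· + ξ) + ε` holds, `φ (· + ξ + σ ε)` is an
asymptotic upper bound of `v`.

The shifts giving asymptotic upper bounds have a least element `ξ`; they are bounded below because
the reflection `w ↦ 1 - w (-·)` turns the same argument into asymptotic lower bounds. If `v` did not
converge to `φ (· + ξ)`, a gap below it would persist at arbitrarily late times. The kernel charges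
both sides of the origin, so within a bounded number of steps the gap spreads over any prescribed
compact set. There it pays for shifting the front slightly to the right, while in the tails `φ` is
so flat that the shift costs almost nothing, and a shift smaller than `ξ` would still be admissible.
-/

/-! ### Convolution with a compactly supported probability density -/

lemma conv_const_mul (p w : ℝ → ℝ) (c x : ℝ) : conv p (fun z => c * w z) x = c * conv p w x := by
  simp only [conv, mul_left_comm _ c, integral_const_mul]

lemma conv_comp_add_const (p w : ℝ → ℝ) (a x : ℝ) :
    conv p (fun z => w (z + a)) x = conv p w (x + a) := by
  simp only [conv, add_sub_right_comm]

/-- A convolution kernel: a continuous, compactly supported probability density on `ℝ`. -/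
structure IsKernel (p : ℝ → ℝ) : Prop where
  continuous : Continuous p
  hasCompactSupport : HasCompactSupport p
  nonneg : ∀ y, 0 ≤ p y
  integral_eq_one : ∫ y, p y = 1

namespace IsKernel

variable {p w w' : ℝ → ℝ} {x : ℝ}

lemma integrable (hp : IsKernel p) : Integrable p :=
  hp.continuous.integrable_of_hasCompactSupport hp.hasCompactSupport

lemma integrable_mul (hp : IsKernel p) (hw : LocallyIntegrable w) (x : ℝ) :
    Integrable fun y => p y * w (x - y) :=
  hp.hasCompactSupport.convolutionExists_left (.mul ℝ ℝ) hp.continuous hw x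

lemma continuous_conv (hp : IsKernel p) (hw : LocallyIntegrable w) : Continuous (conv p w) :=
  hp.hasCompactSupport.continuous_convolution_left (.mul ℝ ℝ) hp.continuous hw

lemma conv_const (hp : IsKernel p) (c x : ℝ) : conv p (fun _ => c) x = c := by
  rw [conv, integral_mul_const, hp.integral_eq_one, one_mul]

lemma conv_add (hp : IsKernel p) (hw : LocallyIntegrable w) (hw' : LocallyIntegrable w') :
    conv p (fun z => w z + w' z) x = conv p w x + conv p w' x := by
  simp only [conv, mul_add]
  exact integral_add (hp.integrable_mul hw x) (hp.integrable_mul hw' x)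

lemma conv_sub (hp : IsKernel p) (hw : LocallyIntegrable w) (hw' : LocallyIntegrable w') :
    conv p (fun z => w z - w' z) x = conv p w x - conv p w' x := by
  simp only [conv, mul_sub]
  exact integral_sub (hp.integrable_mul hw x) (hp.integrable_mul hw' x)

lemma conv_add_const (hp : IsKernel p) (hw : LocallyIntegrable w) (c : ℝ) :
    conv p (fun z => w z + c) x = conv p w x + c := by
  rw [hp.conv_add hw (locallyIntegrable_const c), hp.conv_const]

lemma conv_le_conv (hp : IsKernel p) (hw : LocallyIntegrable w) (hw' : LocallyIntegrable w')
    (h : ∀ y, p y ≠ 0 → w (x - y) ≤ w' (x - y)) : conv p w x ≤ conv p w' x := by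
  refine integral_mono (hp.integrable_mul hw x) (hp.integrable_mul hw' x) fun y => ?_
  by_cases hy : p y = 0
  · simp [hy]
  · exact mul_le_mul_of_nonneg_left (h y hy) (hp.nonneg y)

lemma le_conv (hp : IsKernel p) (hw : LocallyIntegrable w) {c : ℝ}
    (h : ∀ y, p y ≠ 0 → c ≤ w (x - y)) : c ≤ conv p w x :=
  (hp.conv_const c x).ge.trans (hp.conv_le_conv (locallyIntegrable_const c) hw h)

lemma conv_le (hp : IsKernel p) (hw : LocallyIntegrable w) {c : ℝ}
    (h : ∀ y, p y ≠ 0 → w (x - y) ≤ c) : conv p w x ≤ c :=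
  (hp.conv_le_conv hw (locallyIntegrable_const c) h).trans (hp.conv_const c x).le

lemma monotone_conv (hp : IsKernel p) (hw : Monotone w) : Monotone (conv p w) := fun a b hab =>
  integral_mono (hp.integrable_mul hw.locallyIntegrable a)
    (hp.integrable_mul hw.locallyIntegrable b) fun y =>
      mul_le_mul_of_nonneg_left (hw (by linarith)) (hp.nonneg y)

lemma exists_forall_abs_le (hp : IsKernel p) : ∃ K, ∀ y, p y ≠ 0 → |y| ≤ K := by
  obtain ⟨K, hK⟩ := hp.hasCompactSupport.isCompact.isBounded.exists_norm_le
  exact ⟨K, fun y hy => hK y (subset_tsupport p hy)⟩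

lemma map_sub_le_conv (hp : IsKernel p) {K : ℝ} (hK : ∀ y, p y ≠ 0 → |y| ≤ K) (hw : Monotone w)
    (x : ℝ) : w (x - K) ≤ conv p w x :=
  hp.le_conv hw.locallyIntegrable fun y hy => hw (by linarith [(abs_le.1 (hK y hy)).2])

lemma conv_le_map_add (hp : IsKernel p) {K : ℝ} (hK : ∀ y, p y ≠ 0 → |y| ≤ K) (hw : Monotone w)
    (x : ℝ) : conv p w x ≤ w (x + K) :=
  hp.conv_le hw.locallyIntegrable fun y hy => hw (by linarith [(abs_le.1 (hK y hy)).1])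

lemma tendsto_conv_atBot (hp : IsKernel p) (hw : Monotone w) {c : ℝ}
    (h : Tendsto w atBot (𝓝 c)) : Tendsto (conv p w) atBot (𝓝 c) := by
  obtain ⟨K, hK⟩ := hp.exists_forall_abs_le
  exact tendsto_of_tendsto_of_tendsto_of_le_of_le
    (h.comp (tendsto_atBot_add_const_right _ (-K) tendsto_id))
    (h.comp (tendsto_atBot_add_const_right _ K tendsto_id))
    (fun x => hp.map_sub_le_conv hK hw x) fun x => hp.conv_le_map_add hK hw x

lemma tendsto_conv_atTop (hp : IsKernel p) (hw : Monotone w) {c : ℝ}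
    (h : Tendsto w atTop (𝓝 c)) : Tendsto (conv p w) atTop (𝓝 c) := by
  obtain ⟨K, hK⟩ := hp.exists_forall_abs_le
  exact tendsto_of_tendsto_of_tendsto_of_le_of_le
    (h.comp (tendsto_atTop_add_const_right _ (-K) tendsto_id))
    (h.comp (tendsto_atTop_add_const_right _ K tendsto_id))
    (fun x => hp.map_sub_le_conv hK hw x) fun x => hp.conv_le_map_add hK hw x

lemma hasDerivAt_conv (hp : IsKernel p) (hw : ContDiff ℝ 1 w) (x : ℝ) :
    HasDerivAt (conv p w) (conv p (deriv w) x) x := by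
  have hd : Continuous (deriv w) := hw.continuous_deriv le_rfl
  obtain ⟨K, hK⟩ := hp.exists_forall_abs_le
  obtain ⟨C, hC⟩ := (isCompact_closedBall x (K + 1)).exists_bound_of_continuousOn hd.continuousOn
  have hC' : ∀ᵐ y, ∀ z ∈ Metric.ball x 1, ‖p y * deriv w (z - y)‖ ≤ p y * C := by
    refine Eventually.of_forall fun y z hz => ?_
    by_cases hy : p y = 0
    · simp [hy]
    rw [norm_mul, Real.norm_of_nonneg (hp.nonneg y)]
    refine mul_le_mul_of_nonneg_left (hC _ ?_) (hp.nonneg y)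
    have h₁ := abs_le.1 (hK y hy)
    rw [Metric.mem_ball, Real.dist_eq, abs_lt] at hz
    rw [Metric.mem_closedBall, Real.dist_eq, abs_le]
    constructor <;> linarith
  exact (hasDerivAt_integral_of_dominated_loc_of_deriv_le (Metric.ball_mem_nhds x one_pos)
    (Eventually.of_forall fun z =>
      (hp.integrable_mul hw.continuous.locallyIntegrable z).aestronglyMeasurable)
    (hp.integrable_mul hw.continuous.locallyIntegrable x)
    (hp.integrable_mul hd.locallyIntegrable x).aestronglyMeasurable hC'
    (hp.integrable.mul_const C) (Eventually.of_forall fun y z _ =>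
      ((hw.differentiable one_ne_zero _).hasDerivAt.comp_sub_const z y).const_mul (p y))).2

lemma exists_conv_deriv_le (hp : IsKernel p) : ∃ C > 0, ∃ K, ∀ {w : ℝ → ℝ}, Monotone w →
    ContDiff ℝ 1 w → ∀ x, conv p (deriv w) x ≤ C * (w (x + K) - w (x - K)) := by
  obtain ⟨K, hK⟩ := hp.exists_forall_abs_le
  obtain ⟨C, hC⟩ := hp.continuous.bounded_above_of_compact_support hp.hasCompactSupport
  refine ⟨max C 1, by positivity, max K 0, fun {w} hw hw₁ x => ?_⟩
  have hd : Continuous fun y => deriv w (x - y) :=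
    (hw₁.continuous_deriv le_rfl).comp (continuous_sub_left x)
  calc conv p (deriv w) x
      = ∫ y in -max K 0..max K 0, p y * deriv w (x - y) := by
        rw [intervalIntegral.integral_of_le (neg_le_self (le_max_right K 0)),
          ← integral_Icc_eq_integral_Ioc]
        refine (setIntegral_eq_integral_of_forall_compl_eq_zero fun y hy => ?_).symm
        contrapose! hy
        exact abs_le.1 ((hK y (left_ne_zero_of_mul hy)).trans (le_max_left K 0))
    _ ≤ ∫ y in -max K 0..max K 0, max C 1 * deriv w (x - y) := by
        refine intervalIntegral.integral_mono_on (neg_le_self (le_max_right K 0))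
          ((hp.continuous.mul hd).intervalIntegrable _ _)
          ((continuous_const.mul hd).intervalIntegrable _ _) fun y _ => ?_
        exact mul_le_mul_of_nonneg_right ((le_abs_self _).trans ((hC y).trans (le_max_left C 1)))
          hw.deriv_nonneg
    _ = max C 1 * (w (x + max K 0) - w (x - max K 0)) := by
        rw [intervalIntegral.integral_const_mul, intervalIntegral.integral_comp_sub_left,
          intervalIntegral.integral_deriv_eq_sub' w rfl
            (fun z _ => hw₁.differentiable one_ne_zero z)
            (hw₁.continuous_deriv le_rfl).continuousOn, sub_neg_eq_add]

lemma comp_neg (hp : IsKernel p) : IsKernel fun y => p (-y) where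
  continuous := hp.continuous.comp continuous_neg
  hasCompactSupport := hp.hasCompactSupport.comp_homeomorph (.neg ℝ)
  nonneg y := hp.nonneg (-y)
  integral_eq_one := by rw [integral_neg_eq_self, hp.integral_eq_one]

end IsKernel

lemma isKernel_qshift {p : ℝ → ℝ} (hp : IsKernel p) (ℓ : ℝ) : IsKernel (qshift p ℓ) where
  continuous := hp.continuous.comp (continuous_add_const ℓ)
  hasCompactSupport := hp.hasCompactSupport.comp_homeomorph (.addRight ℓ)
  nonneg y := hp.nonneg (y + ℓ)
  integral_eq_one := by simp only [qshift, integral_add_right_eq_self, hp.integral_eq_one]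

lemma conv_qshift (p w : ℝ → ℝ) (ℓ x : ℝ) : conv (qshift p ℓ) w x = conv p w (x + ℓ) := by
  rw [conv, conv, ← integral_add_right_eq_self (fun y => p y * w (x + ℓ - y)) ℓ]
  simp only [qshift, add_sub_add_right_eq_sub]

/-! ### Spreading of positivity -/

namespace IsKernel

variable {p : ℝ → ℝ} {y : ℝ}

lemma conv_pos (hp : IsKernel p) {w : ℝ → ℝ} (hw : LocallyIntegrable w) (hw₀ : ∀ z, 0 ≤ w z)
    {x : ℝ} (hy : 0 < p y) (hpos : ∀ᶠ z in 𝓝 (x - y), 0 < w z) : 0 < conv p w x := by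
  refine (integral_pos_iff_support_of_nonneg (fun z => mul_nonneg (hp.nonneg z) (hw₀ _))
    (hp.integrable_mul hw x)).2 (Measure.measure_pos_of_mem_nhds volume (x := y) ?_)
  filter_upwards [hp.continuous.continuousAt.eventually (lt_mem_nhds hy),
    (continuous_sub_left x).continuousAt.eventually hpos] with z hpz hwz
  exact (mul_pos hpz hwz).ne'

lemma exists_le_conv_indicator (hp : IsKernel p) (hy : 0 < p y) :
    ∃ s > 0, ∀ r > 0, ∃ μ > 0, ∀ c, ∀ x ∈ Metric.closedBall (c + y) (r + s),
      μ ≤ conv p ((Metric.closedBall c r).indicator 1) x := by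
  obtain ⟨ε, hε, hpos⟩ := Metric.eventually_nhds_iff_ball.1
    (hp.continuous.continuousAt.eventually (lt_mem_nhds hy))
  refine ⟨ε / 2, half_pos hε, fun r hr => ?_⟩
  have hint : LocallyIntegrable ((Metric.closedBall (0 : ℝ) r).indicator (1 : ℝ → ℝ)) :=
    (locallyIntegrable_const 1).indicator Metric.isClosed_closedBall.measurableSet
  obtain ⟨μ, hμ, hle⟩ := (isCompact_closedBall (0 + y) (r + ε / 2)).exists_forall_le'
    (hp.continuous_conv hint).continuousOn (a := 0) fun x hx => by
      obtain ⟨z, hz, y', hy', rfl⟩ := Set.mem_add.1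
        (ball_add_ball hr hε 0 y ▸ Metric.closedBall_subset_ball (by linarith) hx)
      refine hp.conv_pos hint (Set.indicator_nonneg fun _ _ => zero_le_one) (hpos y' hy') ?_
      rw [add_sub_cancel_right]
      filter_upwards [Metric.isOpen_ball.mem_nhds hz] with t ht
      rw [Set.indicator_of_mem (Metric.ball_subset_closedBall ht)]
      exact one_pos
  refine ⟨μ, hμ, fun c x hx => (hle (x + -c) ?_).trans_eq ?_⟩
  · rw [Metric.mem_closedBall, Real.dist_eq] at hx ⊢
    convert hx using 2
    ring
  · rw [← conv_comp_add_const]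
    congr 1 with z
    simp [Set.indicator, Real.dist_eq, sub_eq_add_neg]

end IsKernel

/-- The inequality `d (n + 1) ≥ c (p * d n)` with an unspecified `c > 0`, in the weak form needed
to propagate positivity: it is only required where `p * d n` is bounded below, locally uniformly
in space, for large times, and for functions that are nonnegative up to a vanishing error. -/
structure IsConvSupersolution (p : ℝ → ℝ) (d : ℕ → ℝ → ℝ) : Prop where
  locallyIntegrable : ∀ n, LocallyIntegrable (d n)
  eventually_neg_le : ∀ ε > 0, ∀ᶠ n in atTop, ∀ x, -ε ≤ d n x
  exists_le_succ : ∀ R, ∀ γ > 0, ∃ γ' > 0, ∀ᶠ n in atTop, ∀ x, |x| ≤ R →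
    γ ≤ conv p (d n) x → γ' ≤ d (n + 1) x

namespace IsConvSupersolution

variable {p : ℝ → ℝ} {d : ℕ → ℝ → ℝ}

lemma exists_le_closedBall_succ (hd : IsConvSupersolution p d) (hp : IsKernel p) {y : ℝ}
    (hy : 0 < p y) : ∃ s > 0, ∀ r > 0, ∀ γ > 0, ∀ R, ∃ γ' > 0, ∀ᶠ n in atTop, ∀ c, |c + y| ≤ R →
      (∀ x ∈ Metric.closedBall c r, γ ≤ d n x) →
      ∀ x ∈ Metric.closedBall (c + y) (r + s), γ' ≤ d (n + 1) x := by
  obtain ⟨s, hs, hspread⟩ := hp.exists_le_conv_indicator hy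
  refine ⟨s, hs, fun r hr γ hγ R => ?_⟩
  obtain ⟨μ, hμ, hle⟩ := hspread r hr
  have hγμ : 0 < γ * μ / 2 := by positivity
  obtain ⟨γ', hγ', hsucc⟩ := hd.exists_le_succ (r + s + R) _ hγμ
  refine ⟨γ', hγ', ?_⟩
  filter_upwards [hsucc, hd.eventually_neg_le _ hγμ] with n hsucc hneg c hc hball x hx
  have hind : LocallyIntegrable fun z => γ * (Metric.closedBall c r).indicator (1 : ℝ → ℝ) z :=
    ((locallyIntegrable_const 1).indicator Metric.isClosed_closedBall.measurableSet).smul γ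
  have hlower : ∀ z, γ * (Metric.closedBall c r).indicator 1 z + -(γ * μ / 2) ≤ d n z := by
    intro z
    by_cases hz : z ∈ Metric.closedBall c r
    · rw [Set.indicator_of_mem hz, Pi.one_apply]
      linarith [hball z hz]
    · rw [Set.indicator_of_notMem hz]
      linarith [hneg z]
  refine hsucc x ?_ ?_
  · linarith [abs_sub_abs_le_abs_sub x (c + y), Metric.mem_closedBall.1 hx, Real.dist_eq x (c + y)]
  · calc γ * μ / 2 = γ * μ + -(γ * μ / 2) := by ring
      _ ≤ γ * conv p ((Metric.closedBall c r).indicator 1) x + -(γ * μ / 2) := by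
        gcongr
        exact hle c x hx
      _ = conv p (fun z => γ * (Metric.closedBall c r).indicator 1 z + -(γ * μ / 2)) x := by
        rw [hp.conv_add_const hind, conv_const_mul]
      _ ≤ conv p (d n) x := hp.conv_le_conv (hind.add (locallyIntegrable_const _))
        (hd.locallyIntegrable n) fun y _ => hlower _

lemma exists_closedBall_succ (hd : IsConvSupersolution p d) (hp : IsKernel p)
    (hneg : ∃ y < 0, 0 < p y) (hpos : ∃ y > 0, 0 < p y) :
    ∃ s > 0, ∃ M, ∀ R ≥ M, ∀ r > 0, ∀ γ > 0, ∃ γ' > 0, ∀ᶠ n in atTop, ∀ c, |c| ≤ R →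
      (∀ x ∈ Metric.closedBall c r, γ ≤ d n x) →
      ∃ c', |c'| ≤ R ∧ ∀ x ∈ Metric.closedBall c' (r + s), γ' ≤ d (n + 1) x := by
  obtain ⟨y₁, hy₁, hp₁⟩ := hneg
  obtain ⟨y₂, hy₂, hp₂⟩ := hpos
  obtain ⟨s₁, hs₁, hspread₁⟩ := hd.exists_le_closedBall_succ hp hp₁
  obtain ⟨s₂, hs₂, hspread₂⟩ := hd.exists_le_closedBall_succ hp hp₂
  refine ⟨min s₁ s₂, lt_min hs₁ hs₂, max (-y₁) y₂, fun R hR r hr γ hγ => ?_⟩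
  obtain ⟨γ₁, hγ₁, hstep₁⟩ := hspread₁ r hr γ hγ R
  obtain ⟨γ₂, hγ₂, hstep₂⟩ := hspread₂ r hr γ hγ R
  have hR₁ : -y₁ ≤ R := (le_max_left _ _).trans hR
  have hR₂ : y₂ ≤ R := (le_max_right _ _).trans hR
  refine ⟨min γ₁ γ₂, lt_min hγ₁ hγ₂, ?_⟩
  filter_upwards [hstep₁, hstep₂] with n hstep₁ hstep₂ c hc hball
  rw [abs_le] at hc
  -- The centre stays in `[-R, R]` if it always moves towards the origin.
  rcases le_total 0 c with hc₀ | hc₀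
  · have hc' : |c + y₁| ≤ R := abs_le.2 ⟨by linarith, by linarith⟩
    exact ⟨c + y₁, hc', fun x hx => (min_le_left _ _).trans (hstep₁ c hc' hball x
      (Metric.closedBall_subset_closedBall (by gcongr; exact min_le_left _ _) hx))⟩
  · have hc' : |c + y₂| ≤ R := abs_le.2 ⟨by linarith, by linarith⟩
    exact ⟨c + y₂, hc', fun x hx => (min_le_right _ _).trans (hstep₂ c hc' hball x
      (Metric.closedBall_subset_closedBall (by gcongr; exact min_le_right _ _) hx))⟩

theorem exists_le_add (hd : IsConvSupersolution p d) (hp : IsKernel p)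
    (hneg : ∃ y < 0, 0 < p y) (hpos : ∃ y > 0, 0 < p y) (R R' : ℝ) {r γ : ℝ} (hr : 0 < r)
    (hγ : 0 < γ) : ∃ k, ∃ γ' > 0, ∀ᶠ n in atTop, ∀ c, |c| ≤ R →
      (∀ x ∈ Metric.closedBall c r, γ ≤ d n x) → ∀ x, |x| ≤ R' → γ' ≤ d (n + k) x := by
  obtain ⟨s, hs, M, hstep⟩ := hd.exists_closedBall_succ hp hneg hpos
  have hiter : ∀ k : ℕ, ∀ r > 0, ∀ γ > 0, ∃ γ' > 0, ∀ᶠ n in atTop, ∀ c, |c| ≤ max R M →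
      (∀ x ∈ Metric.closedBall c r, γ ≤ d n x) →
      ∃ c', |c'| ≤ max R M ∧ ∀ x ∈ Metric.closedBall c' (r + k * s), γ' ≤ d (n + k) x := by
    intro k
    induction k with
    | zero => exact fun r _ γ hγ => ⟨γ, hγ, .of_forall fun n c hc hball => ⟨c, hc, by simpa⟩⟩
    | succ k ih =>
      intro r hr γ hγ
      obtain ⟨γ₁, hγ₁, hstep₁⟩ := hstep _ (le_max_right R M) r hr γ hγ
      obtain ⟨γ₂, hγ₂, hstep₂⟩ := ih (r + s) (by positivity) γ₁ hγ₁
      refine ⟨γ₂, hγ₂, ?_⟩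
      filter_upwards [hstep₁, (tendsto_add_atTop_nat 1).eventually hstep₂] with n h₁ h₂ c hc hball
      obtain ⟨c₁, hc₁, hball₁⟩ := h₁ c hc hball
      obtain ⟨c₂, hc₂, hball₂⟩ := h₂ c₁ hc₁ hball₁
      refine ⟨c₂, hc₂, fun x hx => ?_⟩
      rw [← add_assoc, add_right_comm]
      exact hball₂ x (by rwa [add_assoc r, add_comm s, ← add_one_mul, ← Nat.cast_succ])
  obtain ⟨k, hk⟩ := exists_nat_ge ((R' + max R M) / s)
  obtain ⟨γ', hγ', hev⟩ := hiter k r hr γ hγ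
  refine ⟨k, γ', hγ', ?_⟩
  filter_upwards [hev] with n hn c hc hball x hx
  obtain ⟨c', hc', hball'⟩ := hn c (hc.trans (le_max_left _ _)) hball
  refine hball' x (Metric.mem_closedBall.2 ?_)
  rw [div_le_iff₀ hs] at hk
  linarith [abs_sub x c', Real.dist_eq x c']

end IsConvSupersolution

/-! ### Bistable maps -/

lemma le_add_mul_of_deriv_le {f : ℝ → ℝ} (hf : Differentiable ℝ f) {a b C : ℝ} (hab : a ≤ b)
    (h : ∀ z ∈ Set.Icc a b, deriv f z ≤ C) : f b ≤ f a + C * (b - a) := by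
  linarith [(convex_Icc a b).image_sub_le_mul_sub_of_deriv_le hf.continuous.continuousOn
    hf.differentiableOn (fun z hz => h z (interior_subset hz)) a (Set.left_mem_Icc.2 hab) b
    (Set.right_mem_Icc.2 hab) hab]

lemma add_mul_le_of_le_deriv {f : ℝ → ℝ} (hf : Differentiable ℝ f) {a b C : ℝ} (hab : a ≤ b)
    (h : ∀ z ∈ Set.Icc a b, C ≤ deriv f z) : f a + C * (b - a) ≤ f b := by
  linarith [(convex_Icc a b).mul_sub_le_image_sub_of_le_deriv hf.continuous.continuousOn
    hf.differentiableOn (fun z hz => h z (interior_subset hz)) a (Set.left_mem_Icc.2 hab) b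
    (Set.right_mem_Icc.2 hab) hab]

/-- A monotone `C¹` map with linearly stable fixed points `0` and `1` and positive derivative in
between. The number of fixed points in `(0, 1)` is not prescribed. -/
structure IsBistable (g : ℝ → ℝ) : Prop where
  contDiff : ContDiff ℝ 1 g
  monotone : Monotone g
  map_zero : g 0 = 0
  map_one : g 1 = 1
  deriv_pos : ∀ t ∈ Set.Ioo 0 1, 0 < deriv g t
  deriv_zero_lt_one : deriv g 0 < 1
  deriv_one_lt_one : deriv g 1 < 1

/-- The conjugate of a self-map of `[0, 1]` under `t ↦ 1 - t`, see `reflect`. -/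
def reflectMap (g : ℝ → ℝ) (t : ℝ) : ℝ := 1 - g (1 - t)

lemma deriv_reflectMap (g : ℝ → ℝ) (t : ℝ) : deriv (reflectMap g) t = deriv g (1 - t) := by
  unfold reflectMap
  rw [deriv_const_sub, deriv_comp_const_sub, neg_neg]

namespace IsBistable

variable {g : ℝ → ℝ}

lemma differentiable (hg : IsBistable g) : Differentiable ℝ g :=
  hg.contDiff.differentiable one_ne_zero

lemma continuous_deriv (hg : IsBistable g) : Continuous (deriv g) :=
  hg.contDiff.continuous_deriv le_rfl

lemma map_lt_map (hg : IsBistable g) {s t : ℝ} (hst : s < t) (ht : t ∈ Set.Ioc 0 1) :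
    g s < g t := by
  have hmono : StrictMonoOn g (Set.Icc 0 1) :=
    strictMonoOn_of_deriv_pos (convex_Icc 0 1) hg.contDiff.continuous.continuousOn
      fun x hx => hg.deriv_pos x (by rwa [interior_Icc] at hx)
  exact (hg.monotone (le_max_left s 0)).trans_lt (hmono
    ⟨le_max_right s 0, max_le (hst.le.trans ht.2) zero_le_one⟩ ⟨ht.1.le, ht.2⟩ (max_lt hst ht.1))

lemma map_mem_Icc (hg : IsBistable g) {t : ℝ} (ht : t ∈ Set.Icc 0 1) : g t ∈ Set.Icc 0 1 :=
  ⟨hg.map_zero ▸ hg.monotone ht.1, hg.map_one ▸ hg.monotone ht.2⟩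

lemma exists_map_add_le (hg : IsBistable g) :
    ∃ L > 0, ∀ t ∈ Set.Icc (0 : ℝ) 1, ∀ ε ∈ Set.Icc (0 : ℝ) 1, g (t + ε) ≤ g t + L * ε := by
  obtain ⟨L, hL⟩ := (isCompact_Icc (a := (0 : ℝ)) (b := 2)).exists_bound_of_continuousOn
    hg.continuous_deriv.continuousOn
  refine ⟨max L 1, by positivity, fun t ht ε hε => ?_⟩
  simpa using le_add_mul_of_deriv_le hg.differentiable (le_add_of_nonneg_right hε.1)
    fun z hz => (le_abs_self _).trans <|
      (hL z ⟨ht.1.trans hz.1, by linarith [hz.2, ht.2, hε.2]⟩).trans (le_max_left L 1)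

lemma exists_map_add_le_of_deriv_lt_one (hg : IsBistable g) {a : ℝ} (ha : deriv g a < 1) :
    ∃ β ∈ Set.Ioo (0 : ℝ) 1, ∃ η > 0, ∀ t ε, |t - a| ≤ η → 0 ≤ ε → ε ≤ η →
      g (t + ε) ≤ g t + β * ε := by
  have ha₀ : 0 ≤ deriv g a := hg.monotone.deriv_nonneg
  obtain ⟨η, hη, hball⟩ := Metric.eventually_nhds_iff_ball.1
    (hg.continuous_deriv.continuousAt.eventually
      (gt_mem_nhds (show deriv g a < (1 + deriv g a) / 2 by linarith)))
  refine ⟨(1 + deriv g a) / 2, ⟨by linarith, by linarith⟩, η / 3, by positivity,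
    fun t ε ht hε hεη => ?_⟩
  simpa using le_add_mul_of_deriv_le hg.differentiable (le_add_of_nonneg_right hε)
    fun z hz => (hball z (by
      rw [abs_le] at ht
      rw [Metric.mem_ball, Real.dist_eq, abs_lt]
      constructor <;> linarith [hz.1, hz.2])).le

lemma exists_map_add_le_of_near (hg : IsBistable g) :
    ∃ β ∈ Set.Ioo (0 : ℝ) 1, ∃ η > 0, ∀ t ∈ Set.Icc (0 : ℝ) 1, t ≤ η ∨ 1 - η ≤ t →
      ∀ ε ∈ Set.Icc 0 η, g (t + ε) ≤ g t + β * ε := by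
  obtain ⟨β₀, hβ₀, η₀, hη₀, h₀⟩ := hg.exists_map_add_le_of_deriv_lt_one hg.deriv_zero_lt_one
  obtain ⟨β₁, hβ₁, η₁, hη₁, h₁⟩ := hg.exists_map_add_le_of_deriv_lt_one hg.deriv_one_lt_one
  refine ⟨max β₀ β₁, ⟨lt_max_of_lt_left hβ₀.1, max_lt hβ₀.2 hβ₁.2⟩, min η₀ η₁, lt_min hη₀ hη₁, ?_⟩
  rintro t ⟨ht₀, ht₁⟩ (ht | ht) ε ⟨hε₀, hε⟩
  · refine (h₀ t ε ?_ hε₀ (hε.trans (min_le_left _ _))).trans (by gcongr; exact le_max_left _ _)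
    rw [sub_zero, abs_of_nonneg ht₀]
    exact ht.trans (min_le_left _ _)
  · refine (h₁ t ε ?_ hε₀ (hε.trans (min_le_right _ _))).trans (by gcongr; exact le_max_right _ _)
    rw [abs_of_nonpos (by linarith)]
    linarith [min_le_right η₀ η₁]

lemma exists_map_lt_self (hg : IsBistable g) : ∃ t ∈ Set.Ioo 0 1, g t < t := by
  obtain ⟨β, hβ, η, hη, hle⟩ := hg.exists_map_add_le_of_near
  have hpos : 0 < min η (1 / 2) := by positivity
  refine ⟨min η (1 / 2), ⟨hpos, by linarith [min_le_right η (1 / 2)]⟩, ?_⟩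
  have := hle 0 (by norm_num) (.inl hη.le) _ ⟨hpos.le, min_le_left _ _⟩
  rw [hg.map_zero, zero_add, zero_add] at this
  exact this.trans_lt (mul_lt_of_lt_one_left hpos hβ.2)

end IsBistable

lemma isBistable_reflectMap {g : ℝ → ℝ} (hg : IsBistable g) : IsBistable (reflectMap g) where
  contDiff := contDiff_const.sub (hg.contDiff.comp (contDiff_const.sub contDiff_id))
  monotone s t hst := sub_le_sub_left (hg.monotone (sub_le_sub_left hst 1)) 1
  map_zero := by simp [reflectMap, hg.map_one]
  map_one := by simp [reflectMap, hg.map_zero]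
  deriv_pos t ht := by
    rw [deriv_reflectMap]
    exact hg.deriv_pos _ ⟨by linarith [ht.2], by linarith [ht.1]⟩
  deriv_zero_lt_one := by simpa [deriv_reflectMap] using hg.deriv_one_lt_one
  deriv_one_lt_one := by simpa [deriv_reflectMap] using hg.deriv_zero_lt_one

/-! ### Stationary fronts -/

/-- The symmetry `w ↦ 1 - w (-·)` exchanging the states `0` and `1`; it turns statements about
upper bounds and the left tail into statements about lower bounds and the right tail. -/
def reflect (w : ℝ → ℝ) (x : ℝ) : ℝ := 1 - w (-x)

lemma monotone_reflect {w : ℝ → ℝ} (hw : Monotone w) : Monotone (reflect w) :=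
  fun _ _ hxy => sub_le_sub_left (hw (neg_le_neg hxy)) 1

lemma tendsto_reflect_atBot {w : ℝ → ℝ} (h : Tendsto w atTop (𝓝 1)) :
    Tendsto (reflect w) atBot (𝓝 0) := by
  have := (h.comp tendsto_neg_atBot_atTop).const_sub 1
  rwa [sub_self] at this

lemma tendsto_reflect_atTop {w : ℝ → ℝ} (h : Tendsto w atBot (𝓝 0)) :
    Tendsto (reflect w) atTop (𝓝 1) := by
  have := (h.comp tendsto_neg_atTop_atBot).const_sub 1
  rwa [sub_zero] at this

lemma conv_reflect {p w : ℝ → ℝ} (hp : IsKernel p) (hw : LocallyIntegrable w) :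
    conv (fun y => p (-y)) (reflect w) = reflect (conv p w) := by
  ext x
  calc conv (fun y => p (-y)) (reflect w) x = ∫ y, (p (-y) - p (-y) * w (-x - -y)) := by
        simp only [conv, reflect, mul_sub, mul_one, neg_sub, sub_neg_eq_add, neg_add_eq_sub]
    _ = ∫ y, (p y - p y * w (-x - y)) :=
        integral_neg_eq_self (fun y => p y - p y * w (-x - y)) volume
    _ = reflect (conv p w) x := by
        rw [integral_sub hp.integrable (hp.integrable_mul hw _), hp.integral_eq_one, reflect, conv]

lemma reflect_eq_map_conv {g p w w' : ℝ → ℝ} (hp : IsKernel p) (hw : LocallyIntegrable w)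
    (h : ∀ x, w' x = g (conv p w x)) (x : ℝ) :
    reflect w' x = reflectMap g (conv (fun y => p (-y)) (reflect w) x) := by
  simp only [conv_reflect hp hw, reflect, reflectMap, h, sub_sub_cancel]

/-- A stationary front of the recursion `v ↦ g (p * v)`: a monotone `C¹` fixed point connecting
`0` at `-∞` to `1` at `+∞`. A travelling wave is a stationary front in its moving frame, that is,
for a shifted kernel. -/
structure IsStationaryFront (g p φ : ℝ → ℝ) : Prop where
  monotone : Monotone φ
  contDiff : ContDiff ℝ 1 φ
  eq_map_conv : ∀ x, φ x = g (conv p φ x)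
  tendsto_atBot : Tendsto φ atBot (𝓝 0)
  tendsto_atTop : Tendsto φ atTop (𝓝 1)

lemma isStationaryFront_reflect {g p φ : ℝ → ℝ} (hφ : IsStationaryFront g p φ)
    (hp : IsKernel p) : IsStationaryFront (reflectMap g) (fun y => p (-y)) (reflect φ) where
  monotone := monotone_reflect hφ.monotone
  contDiff := contDiff_const.sub (hφ.contDiff.comp contDiff_neg)
  eq_map_conv := reflect_eq_map_conv hp hφ.monotone.locallyIntegrable hφ.eq_map_conv
  tendsto_atBot := tendsto_reflect_atBot hφ.tendsto_atTop
  tendsto_atTop := tendsto_reflect_atTop hφ.tendsto_atBot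

namespace IsStationaryFront

variable {g p φ : ℝ → ℝ}

lemma differentiable (hφ : IsStationaryFront g p φ) : Differentiable ℝ φ :=
  hφ.contDiff.differentiable one_ne_zero

lemma continuous (hφ : IsStationaryFront g p φ) : Continuous φ := hφ.contDiff.continuous

lemma continuous_deriv (hφ : IsStationaryFront g p φ) : Continuous (deriv φ) :=
  hφ.contDiff.continuous_deriv le_rfl

lemma locallyIntegrable (hφ : IsStationaryFront g p φ) : LocallyIntegrable φ :=
  hφ.continuous.locallyIntegrable

lemma nonneg (hφ : IsStationaryFront g p φ) (x : ℝ) : 0 ≤ φ x :=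
  hφ.monotone.le_of_tendsto hφ.tendsto_atBot x

lemma le_one (hφ : IsStationaryFront g p φ) (x : ℝ) : φ x ≤ 1 :=
  hφ.monotone.ge_of_tendsto hφ.tendsto_atTop x

lemma exists_eq (hφ : IsStationaryFront g p φ) {t : ℝ} (ht : t ∈ Set.Ioo 0 1) : ∃ x, φ x = t :=
  mem_range_of_exists_le_of_exists_ge hφ.continuous
    ((hφ.tendsto_atBot.eventually_le_const ht.1).exists)
    ((hφ.tendsto_atTop.eventually_const_le ht.2).exists)

lemma comp_add_const (hφ : IsStationaryFront g p φ) (ξ : ℝ) :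
    IsStationaryFront g p fun x => φ (x + ξ) where
  monotone x y hxy := hφ.monotone (by gcongr)
  contDiff := hφ.contDiff.comp (contDiff_id.add contDiff_const)
  eq_map_conv x := by rw [hφ.eq_map_conv, conv_comp_add_const]
  tendsto_atBot := hφ.tendsto_atBot.comp (tendsto_atBot_add_const_right _ ξ tendsto_id)
  tendsto_atTop := hφ.tendsto_atTop.comp (tendsto_atTop_add_const_right _ ξ tendsto_id)

lemma exists_neg_kernel_pos (hφ : IsStationaryFront g p φ) (hg : IsBistable g)
    (hp : IsKernel p) : ∃ y < 0, 0 < p y := by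
  by_contra! hneg
  obtain ⟨t, ht, hgt⟩ := hg.exists_map_lt_self
  obtain ⟨x, rfl⟩ := hφ.exists_eq ht
  have hconv : conv p φ x ≤ φ x := hp.conv_le hφ.locallyIntegrable fun y hy =>
    hφ.monotone (sub_le_self x (not_lt.1 fun hy₀ => hy ((hneg y hy₀).antisymm (hp.nonneg y))))
  exact (hgt.trans_eq (hφ.eq_map_conv x)).not_ge (hg.monotone hconv)

lemma exists_pos_kernel_pos (hφ : IsStationaryFront g p φ) (hg : IsBistable g)
    (hp : IsKernel p) : ∃ y > 0, 0 < p y := by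
  obtain ⟨y, hy, hpy⟩ := (isStationaryFront_reflect hφ hp).exists_neg_kernel_pos
    (isBistable_reflectMap hg) hp.comp_neg
  exact ⟨-y, neg_pos.2 hy, hpy⟩

lemma conv_mem_Icc (hφ : IsStationaryFront g p φ) (hp : IsKernel p) (x : ℝ) :
    conv p φ x ∈ Set.Icc 0 1 :=
  ⟨hp.le_conv hφ.locallyIntegrable fun _ _ => hφ.nonneg _,
    hp.conv_le hφ.locallyIntegrable fun _ _ => hφ.le_one _⟩

/- At the right end `a` of the zero set of `φ` also `p * φ` vanishes, so `φ` vanishes at a point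
`a - y > a`. -/
lemma pos (hφ : IsStationaryFront g p φ) (hg : IsBistable g) (hp : IsKernel p) (x : ℝ) :
    0 < φ x := by
  by_contra! hx
  obtain ⟨b, hb⟩ := hφ.exists_eq (t := 1 / 2) (by norm_num)
  have hbdd : BddAbove {z | φ z ≤ 0} :=
    ⟨b, fun z hz => (hφ.monotone.reflect_lt (hz.trans_lt (by norm_num [hb]))).le⟩
  have ha : φ (sSup {z | φ z ≤ 0}) ≤ 0 :=
    (isClosed_le hφ.continuous continuous_const).csSup_mem ⟨x, hx⟩ hbdd
  set a := sSup {z | φ z ≤ 0}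
  obtain ⟨y, hy, hpy⟩ := hφ.exists_neg_kernel_pos hg hp
  have hφy : 0 < φ (a - y) := not_le.1 fun h => by linarith [le_csSup hbdd h]
  have hconv : 0 < conv p φ a := hp.conv_pos hφ.locallyIntegrable hφ.nonneg hpy
    (hφ.continuous.continuousAt.eventually (lt_mem_nhds hφy))
  have hga := hg.map_lt_map hconv ⟨hconv, (hφ.conv_mem_Icc hp a).2⟩
  rw [hg.map_zero, ← hφ.eq_map_conv] at hga
  exact hga.not_ge ha

lemma lt_one (hφ : IsStationaryFront g p φ) (hg : IsBistable g) (hp : IsKernel p) (x : ℝ) :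
    φ x < 1 := by
  have h := (isStationaryFront_reflect hφ hp).pos (isBistable_reflectMap hg) hp.comp_neg (-x)
  rw [reflect, neg_neg] at h
  exact sub_pos.1 h

lemma conv_mem_Ioo (hφ : IsStationaryFront g p φ) (hg : IsBistable g) (hp : IsKernel p) (x : ℝ) :
    conv p φ x ∈ Set.Ioo 0 1 := by
  obtain ⟨K, hK⟩ := hp.exists_forall_abs_le
  exact ⟨(hφ.pos hg hp _).trans_le (hp.map_sub_le_conv hK hφ.monotone x),
    (hp.conv_le_map_add hK hφ.monotone x).trans_lt (hφ.lt_one hg hp _)⟩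

lemma deriv_eq (hφ : IsStationaryFront g p φ) (hg : IsBistable g) (hp : IsKernel p) (x : ℝ) :
    deriv φ x = deriv g (conv p φ x) * conv p (deriv φ) x := by
  have h := (hg.differentiable _).hasDerivAt.comp x (hp.hasDerivAt_conv hφ.contDiff x)
  rw [← h.deriv]
  congr 1 with z
  exact hφ.eq_map_conv z

lemma isConvSupersolution_deriv (hφ : IsStationaryFront g p φ) (hg : IsBistable g)
    (hp : IsKernel p) : IsConvSupersolution p fun _ : ℕ => deriv φ where
  locallyIntegrable _ := hφ.continuous_deriv.locallyIntegrable
  eventually_neg_le ε hε := .of_forall fun _ x =>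
    (neg_nonpos.2 hε.le).trans hφ.monotone.deriv_nonneg
  exists_le_succ R γ hγ := by
    obtain ⟨m, hm, hle⟩ := (isCompact_closedBall (0 : ℝ) R).exists_forall_le' (a := 0)
      (hg.continuous_deriv.comp (hp.continuous_conv hφ.locallyIntegrable)).continuousOn
      fun x _ => hg.deriv_pos _ (hφ.conv_mem_Ioo hg hp x)
    refine ⟨m * γ, mul_pos hm hγ, .of_forall fun _ x hx hγx => ?_⟩
    rw [hφ.deriv_eq hg hp]
    exact mul_le_mul (hle x (by simpa using hx)) hγx hγ.le hg.monotone.deriv_nonneg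

lemma exists_deriv_pos (hφ : IsStationaryFront g p φ) : ∃ x, 0 < deriv φ x := by
  by_contra! h
  obtain ⟨a, ha⟩ := hφ.exists_eq (t := 1 / 3) (by norm_num)
  obtain ⟨b, hb⟩ := hφ.exists_eq (t := 2 / 3) (by norm_num)
  have := is_const_of_deriv_eq_zero hφ.differentiable
    (fun x => (h x).antisymm hφ.monotone.deriv_nonneg) a b
  norm_num [ha, hb] at this

lemma deriv_pos (hφ : IsStationaryFront g p φ) (hg : IsBistable g) (hp : IsKernel p) (x : ℝ) :
    0 < deriv φ x := by
  obtain ⟨c, hc⟩ := hφ.exists_deriv_pos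
  obtain ⟨r, hr, hball⟩ := Metric.nhds_basis_closedBall.eventually_iff.1
    (hφ.continuous_deriv.continuousAt.eventually (lt_mem_nhds (half_lt_self hc)))
  obtain ⟨_, γ, hγ, hspread⟩ := (hφ.isConvSupersolution_deriv hg hp).exists_le_add hp
    (hφ.exists_neg_kernel_pos hg hp) (hφ.exists_pos_kernel_pos hg hp) |c| |x| hr (half_pos hc)
  obtain ⟨_, hn⟩ := hspread.exists
  exact hγ.trans_le (hn c le_rfl (fun z hz => (hball hz).le) x le_rfl)

lemma strictMono (hφ : IsStationaryFront g p φ) (hg : IsBistable g) (hp : IsKernel p) :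
    StrictMono φ :=
  strictMono_of_deriv_pos (hφ.deriv_pos hg hp)

lemma exists_deriv_le (hφ : IsStationaryFront g p φ) (hg : IsBistable g) (hp : IsKernel p) :
    ∃ D > 0, ∃ K, ∀ x, deriv φ x ≤ D * (φ (x + K) - φ (x - K)) := by
  obtain ⟨C, hC, K, hconv⟩ := hp.exists_conv_deriv_le
  obtain ⟨L, hL⟩ := (isCompact_Icc (a := (0 : ℝ)) (b := 1)).exists_bound_of_continuousOn
    hg.continuous_deriv.continuousOn
  refine ⟨max L 1 * C, by positivity, K, fun x => ?_⟩
  rw [hφ.deriv_eq hg hp, mul_assoc]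
  exact mul_le_mul ((le_abs_self _).trans ((hL _ (hφ.conv_mem_Icc hp x)).trans (le_max_left _ _)))
    (hconv hφ.monotone hφ.contDiff x) (hp.le_conv hφ.continuous_deriv.locallyIntegrable
      fun _ _ => hφ.monotone.deriv_nonneg) (by positivity)

lemma tendsto_deriv_cocompact (hφ : IsStationaryFront g p φ) (hg : IsBistable g)
    (hp : IsKernel p) : Tendsto (deriv φ) (cocompact ℝ) (𝓝 0) := by
  obtain ⟨D, -, K, hD⟩ := hφ.exists_deriv_le hg hp
  refine squeeze_zero (fun x => hφ.monotone.deriv_nonneg) hD ?_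
  rw [cocompact_eq_atBot_atTop, tendsto_sup]
  constructor
  · simpa [sub_eq_add_neg] using
      ((hφ.tendsto_atBot.comp (tendsto_atBot_add_const_right _ K tendsto_id)).sub
        (hφ.tendsto_atBot.comp (tendsto_atBot_add_const_right _ (-K) tendsto_id))).const_mul D
  · simpa [sub_eq_add_neg] using
      ((hφ.tendsto_atTop.comp (tendsto_atTop_add_const_right _ K tendsto_id)).sub
        (hφ.tendsto_atTop.comp (tendsto_atTop_add_const_right _ (-K) tendsto_id))).const_mul D

lemma exists_map_add_le (hφ : IsStationaryFront g p φ) (hg : IsBistable g) (hp : IsKernel p) :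
    ∃ D > 0, ∀ x, ∀ δ ≥ 0, φ (x + δ) ≤ φ x + D * δ := by
  obtain ⟨D, hD, K, hle⟩ := hφ.exists_deriv_le hg hp
  refine ⟨D, hD, fun x δ hδ => ?_⟩
  simpa using le_add_mul_of_deriv_le hφ.differentiable (le_add_of_nonneg_right hδ)
    fun z _ => (hle z).trans (mul_le_of_le_one_right hD.le
      (by linarith [hφ.le_one (z + K), hφ.nonneg (z - K)]))

lemma exists_map_le_map_sub_add (hφ : IsStationaryFront g p φ) (hg : IsBistable g)
    (hp : IsKernel p) {κ : ℝ} (hκ : 0 < κ) :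
    ∃ R, ∀ x, R ≤ |x| → ∀ δ ∈ Set.Icc (0 : ℝ) 1, φ x ≤ φ (x - δ) + κ * δ := by
  obtain ⟨R, -, hR⟩ := (Metric.hasBasis_cobounded_compl_closedBall (0 : ℝ)).eventually_iff.1
    (Metric.cobounded_eq_cocompact (α := ℝ) ▸
      (hφ.tendsto_deriv_cocompact hg hp).eventually_le_const hκ)
  refine ⟨R + 2, fun x hx δ hδ => ?_⟩
  simpa using le_add_mul_of_deriv_le hφ.differentiable (sub_le_self x hδ.1) fun z hz => hR (by
    rw [Set.mem_compl_iff, Metric.mem_closedBall, Real.dist_0_eq_abs, not_le]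
    have : |x - z| ≤ 1 := abs_le.2 ⟨by linarith [hz.2], by linarith [hz.1, hδ.2]⟩
    linarith [abs_sub_abs_le_abs_sub x z])

/- Where `p * φ` is close to `0` or `1` the slope `β < 1` of `g` absorbs the perturbation; on the
remaining compact set the slope of `φ` is bounded below and a shift proportional to `ε` does. -/
lemma exists_map_conv_add_le (hφ : IsStationaryFront g p φ) (hg : IsBistable g)
    (hp : IsKernel p) : ∃ β ∈ Set.Ioo (0 : ℝ) 1, ∃ τ > 0, ∃ ε₀ > 0, ∀ ε ∈ Set.Icc 0 ε₀, ∀ x,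
      g (conv p φ x + ε) ≤ φ (x + τ * ε) + β * ε := by
  obtain ⟨β, hβ, η, hη, hnear⟩ := hg.exists_map_add_le_of_near
  obtain ⟨L, hL, hLip⟩ := hg.exists_map_add_le
  obtain ⟨a, ha⟩ := ((hp.tendsto_conv_atBot hφ.monotone hφ.tendsto_atBot).eventually_le_const
    hη).exists_forall_of_atBot
  obtain ⟨b, hb⟩ := ((hp.tendsto_conv_atTop hφ.monotone hφ.tendsto_atTop).eventually_const_le
    (sub_lt_self 1 hη)).exists_forall_of_atTop
  obtain ⟨m, hm, hslope⟩ := (isCompact_Icc (a := a) (b := b + 1)).exists_forall_le' (a := 0)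
    hφ.continuous_deriv.continuousOn fun x _ => hφ.deriv_pos hg hp x
  have hτ : 0 < L / m := div_pos hL hm
  refine ⟨β, hβ, L / m, hτ, min η (min 1 (L / m)⁻¹), by positivity, fun ε hε x => ?_⟩
  have hεη : ε ≤ η := hε.2.trans (min_le_left _ _)
  have hε₁ : ε ≤ 1 := hε.2.trans ((min_le_right _ _).trans (min_le_left _ _))
  have hτε₀ : 0 ≤ L / m * ε := mul_nonneg hτ.le hε.1
  have hτε₁ : L / m * ε ≤ 1 := (le_inv_mul_iff₀ hτ).1
    (by simpa using hε.2.trans ((min_le_right _ _).trans (min_le_right _ _)))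
  have htail (h : conv p φ x ≤ η ∨ 1 - η ≤ conv p φ x) :
      g (conv p φ x + ε) ≤ φ (x + L / m * ε) + β * ε :=
    (hnear _ (hφ.conv_mem_Icc hp x) h ε ⟨hε.1, hεη⟩).trans
      (by rw [← hφ.eq_map_conv]; gcongr; exact hφ.monotone (le_add_of_nonneg_right hτε₀))
  rcases le_total x a with hxa | hax
  · exact htail (.inl (ha x hxa))
  rcases le_total b x with hbx | hxb
  · exact htail (.inr (hb x hbx))
  calc g (conv p φ x + ε) ≤ g (conv p φ x) + L * ε := hLip _ (hφ.conv_mem_Icc hp x) ε ⟨hε.1, hε₁⟩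
    _ = φ x + m * (x + L / m * ε - x) := by
      rw [hφ.eq_map_conv]
      field_simp
      ring
    _ ≤ φ (x + L / m * ε) :=
      add_mul_le_of_le_deriv hφ.differentiable (le_add_of_nonneg_right hτε₀)
        fun z hz => hslope z ⟨hax.trans hz.1, by linarith [hz.2]⟩
    _ ≤ φ (x + L / m * ε) + β * ε := le_add_of_nonneg_right (mul_nonneg hβ.1.le hε.1)

end IsStationaryFront

/-! ### Orbits and asymptotic upper bounds -/

/-- An orbit of the recursion `v ↦ g (p * v)` started from a nondecreasing function connecting `0`
at `-∞` to `1` at `+∞`. -/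
structure IsFrontOrbit (g p : ℝ → ℝ) (v : ℕ → ℝ → ℝ) : Prop where
  monotone_zero : Monotone (v 0)
  tendsto_atBot_zero : Tendsto (v 0) atBot (𝓝 0)
  tendsto_atTop_zero : Tendsto (v 0) atTop (𝓝 1)
  succ : ∀ n x, v (n + 1) x = g (conv p (v n) x)

namespace IsFrontOrbit

variable {g p : ℝ → ℝ} {v : ℕ → ℝ → ℝ}

lemma monotone (hv : IsFrontOrbit g p v) (hg : IsBistable g) (hp : IsKernel p) (n : ℕ) :
    Monotone (v n) := by
  induction n with
  | zero => exact hv.monotone_zero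
  | succ n ih => exact funext (hv.succ n) ▸ hg.monotone.comp (hp.monotone_conv ih)

lemma locallyIntegrable (hv : IsFrontOrbit g p v) (hg : IsBistable g) (hp : IsKernel p) (n : ℕ) :
    LocallyIntegrable (v n) :=
  (hv.monotone hg hp n).locallyIntegrable

lemma mem_Icc (hv : IsFrontOrbit g p v) (hg : IsBistable g) (hp : IsKernel p) (n : ℕ) (x : ℝ) :
    v n x ∈ Set.Icc 0 1 := by
  induction n generalizing x with
  | zero => exact ⟨hv.monotone_zero.le_of_tendsto hv.tendsto_atBot_zero x,
      hv.monotone_zero.ge_of_tendsto hv.tendsto_atTop_zero x⟩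
  | succ n ih =>
    rw [hv.succ]
    exact hg.map_mem_Icc ⟨hp.le_conv (hv.locallyIntegrable hg hp n) fun _ _ => (ih _).1,
      hp.conv_le (hv.locallyIntegrable hg hp n) fun _ _ => (ih _).2⟩

end IsFrontOrbit

lemma isFrontOrbit_reflect {g p : ℝ → ℝ} {v : ℕ → ℝ → ℝ} (hv : IsFrontOrbit g p v)
    (hg : IsBistable g) (hp : IsKernel p) :
    IsFrontOrbit (reflectMap g) (fun y => p (-y)) fun n => reflect (v n) where
  monotone_zero := monotone_reflect hv.monotone_zero
  tendsto_atBot_zero := tendsto_reflect_atBot hv.tendsto_atTop_zero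
  tendsto_atTop_zero := tendsto_reflect_atTop hv.tendsto_atBot_zero
  succ n := reflect_eq_map_conv hp (hv.locallyIntegrable hg hp n) (hv.succ n)

/-- `v n ≤ ψ` up to an error that tends to zero uniformly on `ℝ` as `n → ∞`. -/
def AsymptoticLE (v : ℕ → ℝ → ℝ) (ψ : ℝ → ℝ) : Prop :=
  ∀ ε > 0, ∀ᶠ n in atTop, ∀ x, v n x ≤ ψ x + ε

section

variable {g p φ : ℝ → ℝ} {v : ℕ → ℝ → ℝ}

lemma IsFrontOrbit.le_of_le_add {β τ ε₀ : ℝ} (hv : IsFrontOrbit g p v) (hg : IsBistable g)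
    (hp : IsKernel p) (hφ : IsStationaryFront g p φ) (hβ : β ∈ Set.Ioo (0 : ℝ) 1)
    (hstep : ∀ ε ∈ Set.Icc 0 ε₀, ∀ x, g (conv p φ x + ε) ≤ φ (x + τ * ε) + β * ε)
    {n : ℕ} {ξ ε : ℝ} (hε : ε ∈ Set.Icc 0 ε₀) (h : ∀ x, v n x ≤ φ (x + ξ) + ε) (j : ℕ) (x : ℝ) :
    v (n + j) x ≤ φ (x + (ξ + τ * ε * ∑ i ∈ Finset.range j, β ^ i)) + β ^ j * ε := by
  induction j generalizing x with
  | zero => simpa using h x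
  | succ j ih =>
    set ξ' := ξ + τ * ε * ∑ i ∈ Finset.range j, β ^ i with hξ'
    have hβj : β ^ j * ε ∈ Set.Icc 0 ε₀ :=
      ⟨mul_nonneg (pow_nonneg hβ.1.le j) hε.1,
        (mul_le_of_le_one_left hε.1 (pow_le_one₀ hβ.1.le hβ.2.le)).trans hε.2⟩
    have hφξ := (hφ.comp_add_const ξ').locallyIntegrable
    calc v (n + j + 1) x = g (conv p (v (n + j)) x) := hv.succ _ _
      _ ≤ g (conv p (fun z => φ (z + ξ') + β ^ j * ε) x) :=
        hg.monotone (hp.conv_le_conv (hv.locallyIntegrable hg hp _)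
          (hφξ.add (locallyIntegrable_const _)) fun y _ => ih _)
      _ = g (conv p φ (x + ξ') + β ^ j * ε) := by
        rw [hp.conv_add_const hφξ, conv_comp_add_const]
      _ ≤ φ (x + ξ' + τ * (β ^ j * ε)) + β * (β ^ j * ε) := hstep _ hβj _
      _ = φ (x + (ξ + τ * ε * ∑ i ∈ Finset.range (j + 1), β ^ i)) + β ^ (j + 1) * ε := by
        rw [hξ', Finset.sum_range_succ, pow_succ', mul_assoc β]
        congr 2
        ring

theorem IsStationaryFront.exists_asymptoticLE_of_le_add (hφ : IsStationaryFront g p φ)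
    (hg : IsBistable g) (hp : IsKernel p) :
    ∃ σ > 0, ∃ ε₀ > 0, ∀ {v : ℕ → ℝ → ℝ}, IsFrontOrbit g p v → ∀ n ξ, ∀ ε ∈ Set.Icc 0 ε₀,
      (∀ x, v n x ≤ φ (x + ξ) + ε) → AsymptoticLE v fun x => φ (x + (ξ + σ * ε)) := by
  obtain ⟨β, hβ, τ, hτ, ε₀, hε₀, hstep⟩ := hφ.exists_map_conv_add_le hg hp
  have hβ₁ : 0 < 1 - β := sub_pos.2 hβ.2
  refine ⟨τ * (1 - β)⁻¹, by positivity, ε₀, hε₀, fun {v} hv n ξ ε hε h δ hδ => ?_⟩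
  have hlim : Tendsto (fun j : ℕ => β ^ j * ε) atTop (𝓝 0) := by
    simpa using (tendsto_pow_atTop_nhds_zero_of_lt_one hβ.1.le hβ.2).mul_const ε
  obtain ⟨J, hJ⟩ := (hlim.eventually_le_const hδ).exists_forall_of_atTop
  filter_upwards [eventually_ge_atTop (n + J)] with n' hn' x
  obtain ⟨j, rfl⟩ := Nat.exists_eq_add_of_le (le_of_add_le_left hn')
  refine (hv.le_of_le_add hg hp hφ hβ hstep hε h j x).trans
    (add_le_add (hφ.monotone ?_) (hJ j (by omega)))
  have hsum : ∑ i ∈ Finset.range j, β ^ i ≤ (1 - β)⁻¹ := by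
    rw [← mul_one (1 - β)⁻¹, le_inv_mul_iff₀ hβ₁, mul_neg_geom_sum]
    exact sub_le_self 1 (pow_nonneg hβ.1.le j)
  have := hε.1
  rw [mul_right_comm]
  gcongr

/-- The shifts `ξ` for which `φ (· + ξ)` is an asymptotic upper bound of `v`. -/
def upperShifts (φ : ℝ → ℝ) (v : ℕ → ℝ → ℝ) : Set ℝ :=
  {ξ | AsymptoticLE v fun x => φ (x + ξ)}

lemma upperShifts_nonempty (hφ : IsStationaryFront g p φ) (hg : IsBistable g) (hp : IsKernel p)
    (hv : IsFrontOrbit g p v) : (upperShifts φ v).Nonempty := by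
  obtain ⟨σ, -, ε₀, hε₀, hstable⟩ := hφ.exists_asymptoticLE_of_le_add hg hp
  obtain ⟨a, ha⟩ := (hv.tendsto_atBot_zero.eventually_le_const hε₀).exists_forall_of_atBot
  obtain ⟨b, hb⟩ := (hφ.tendsto_atTop.eventually_const_le
    (sub_lt_self 1 hε₀)).exists_forall_of_atTop
  refine ⟨_, hstable hv 0 (b - a) ε₀ ⟨hε₀.le, le_rfl⟩ fun x => ?_⟩
  rcases le_total x a with hx | hx
  · linarith [ha x hx, hφ.nonneg (x + (b - a))]
  · linarith [hb (x + (b - a)) (by linarith), (hv.mem_Icc hg hp 0 x).2]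

lemma upperShifts_bddBelow (hφ : IsStationaryFront g p φ) (hg : IsBistable g) (hp : IsKernel p)
    (hv : IsFrontOrbit g p v) : BddBelow (upperShifts φ v) := by
  obtain ⟨ζ, hζ⟩ := upperShifts_nonempty (isStationaryFront_reflect hφ hp)
    (isBistable_reflectMap hg) hp.comp_neg (isFrontOrbit_reflect hv hg hp)
  refine ⟨-ζ, fun ξ hξ => (hφ.strictMono hg hp).le_iff_le.1 <|
    le_of_forall_pos_le_add fun ε hε => ?_⟩
  obtain ⟨n, hlower, hupper⟩ := ((hζ _ (half_pos hε)).and (hξ _ (half_pos hε))).exists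
  have h₁ := hlower 0
  have h₂ := hupper 0
  simp only [reflect, neg_zero, zero_add] at h₁ h₂
  linarith

lemma exists_isLeast_upperShifts (hφ : IsStationaryFront g p φ) (hg : IsBistable g)
    (hp : IsKernel p) (hv : IsFrontOrbit g p v) : ∃ ξ, IsLeast (upperShifts φ v) ξ := by
  have hne := upperShifts_nonempty hφ hg hp hv
  have hbdd := upperShifts_bddBelow hφ hg hp hv
  obtain ⟨D, hD, hLip⟩ := hφ.exists_map_add_le hg hp
  refine ⟨sInf (upperShifts φ v), fun ε hε => ?_, fun ξ hξ => csInf_le hbdd hξ⟩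
  obtain ⟨ξ, hξ, hlt⟩ := exists_lt_of_csInf_lt hne
    (lt_add_of_pos_right _ (div_pos (half_pos hε) hD))
  filter_upwards [hξ _ (half_pos hε)] with n hn x
  have hδ : D * (ξ - sInf (upperShifts φ v)) ≤ ε / 2 :=
    (le_div_iff₀' hD).1 (sub_le_iff_le_add'.2 hlt.le)
  have := hLip (x + sInf (upperShifts φ v)) _ (sub_nonneg.2 (csInf_le hbdd hξ))
  rw [add_assoc, add_sub_cancel] at this
  linarith [hn x]

/-! ### Convergence to the minimal asymptotic upper bound -/

/- In the tails the slope of `φ` is so small that shifting `φ` to the right by `δ` only adds to the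
error an amount which the stability estimate converts into a shift back by `δ / 2`. -/
lemma IsStationaryFront.exists_asymptoticLE_of_gap (hφ : IsStationaryFront g p φ)
    (hg : IsBistable g) (hp : IsKernel p) : ∃ R, ∀ γ > 0, ∃ ε > 0, ∃ δ > 0, ∀ {v : ℕ → ℝ → ℝ},
      IsFrontOrbit g p v → ∀ n, (∀ x, v n x ≤ φ x + ε) → (∀ x, |x| ≤ R → γ ≤ φ x - v n x) →
      AsymptoticLE v fun x => φ (x + -δ) := by
  obtain ⟨σ, hσ, ε₀, hε₀, hstable⟩ := hφ.exists_asymptoticLE_of_le_add hg hp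
  obtain ⟨D, hD, hLip⟩ := hφ.exists_map_add_le hg hp
  set κ := (4 * σ)⁻¹ with hκ
  have hκ₀ : 0 < κ := by positivity
  obtain ⟨R, htail⟩ := hφ.exists_map_le_map_sub_add hg hp hκ₀
  refine ⟨R, fun γ hγ => ?_⟩
  obtain ⟨δ, hδ, hδ₁⟩ := exists_between
    (show 0 < min 1 (min (γ / D) (ε₀ / (2 * κ))) by positivity)
  rw [lt_min_iff, lt_min_iff, lt_div_iff₀' hD, lt_div_iff₀' (by positivity)] at hδ₁
  obtain ⟨hδ₁, hδγ, hδε⟩ := hδ₁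
  refine ⟨κ * δ, by positivity, δ / 2, half_pos hδ, fun {v} hv n hupper hgap => ?_⟩
  have hshift : -(δ / 2) = -δ + σ * (2 * κ * δ) := by
    rw [hκ]
    field_simp
    ring
  rw [hshift]
  refine hstable hv n (-δ) _ ⟨by positivity, hδε.le⟩ fun x => ?_
  rw [← sub_eq_add_neg]
  rcases le_total R |x| with hx | hx
  · linarith [htail x hx δ ⟨hδ.le, hδ₁.le⟩, hupper x]
  · have := hLip (x - δ) δ hδ.le
    rw [sub_add_cancel] at this
    linarith [hgap x hx, mul_pos hκ₀ hδ]

lemma isConvSupersolution_sub (hφ : IsStationaryFront g p φ) (hg : IsBistable g)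
    (hp : IsKernel p) (hv : IsFrontOrbit g p v) (h : AsymptoticLE v φ) :
    IsConvSupersolution p fun n x => φ x - v n x where
  locallyIntegrable n := hφ.locallyIntegrable.sub (hv.locallyIntegrable hg hp n)
  eventually_neg_le ε hε := by
    filter_upwards [h ε hε] with n hn x
    linarith [hn x]
  exists_le_succ R γ hγ := by
    have hcont := hp.continuous_conv hφ.locallyIntegrable
    obtain ⟨γ', hγ', hle⟩ := (isCompact_closedBall (0 : ℝ) R).exists_forall_le' (a := 0)
      ((hg.contDiff.continuous.comp hcont).sub
        (hg.contDiff.continuous.comp (hcont.sub continuous_const))).continuousOn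
      fun x _ => sub_pos.2 (hg.map_lt_map (sub_lt_self (conv p φ x) hγ)
        (Set.Ioo_subset_Ioc_self (hφ.conv_mem_Ioo hg hp x)))
    refine ⟨γ', hγ', .of_forall fun n x hx hγx => ?_⟩
    rw [hp.conv_sub hφ.locallyIntegrable (hv.locallyIntegrable hg hp n)] at hγx
    calc γ' ≤ g (conv p φ x) - g (conv p φ x - γ) := hle x (by simpa using hx)
      _ ≤ g (conv p φ x) - g (conv p (v n) x) := by
        gcongr
        exact hg.monotone (by linarith)
      _ = φ x - v (n + 1) x := by rw [← hφ.eq_map_conv, ← hv.succ]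

/- A gap persisting at arbitrarily late times would spread, by the strong maximum principle, to the
compact set on which it allows to shift the upper bound further to the right. -/
lemma eventually_sub_lt_of_isLeast (hφ : IsStationaryFront g p φ) (hg : IsBistable g)
    (hp : IsKernel p) (hv : IsFrontOrbit g p v) (hleast : IsLeast (upperShifts φ v) 0) (R' : ℝ)
    {γ : ℝ} (hγ : 0 < γ) : ∀ᶠ n in atTop, ∀ x, |x| ≤ R' → φ x - v n x < γ := by
  have hle : AsymptoticLE v φ := by simpa [upperShifts] using hleast.1
  obtain ⟨R, himprove⟩ := hφ.exists_asymptoticLE_of_gap hg hp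
  obtain ⟨D, hD, hLip⟩ := hφ.exists_map_add_le hg hp
  have hr : 0 < γ / (4 * D) := by positivity
  obtain ⟨k, γ', hγ', hspread⟩ := (isConvSupersolution_sub hφ hg hp hv hle).exists_le_add hp
    (hφ.exists_neg_kernel_pos hg hp) (hφ.exists_pos_kernel_pos hg hp) (R' + γ / (4 * D)) R hr
    (half_pos hγ)
  obtain ⟨ε, hε, δ, hδ, hshift⟩ := himprove γ' hγ'
  filter_upwards [hspread, (tendsto_add_atTop_nat k).eventually (hle ε hε)] with
    n hspread hupper x hx
  by_contra! hgap
  have hball : ∀ z ∈ Metric.closedBall (x - γ / (4 * D)) (γ / (4 * D)), γ / 2 ≤ φ z - v n z := by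
    intro z hz
    rw [Real.closedBall_eq_Icc] at hz
    have hzx : z ≤ x := by linarith [hz.2]
    have hDz : D * (x - z) ≤ γ / 2 := by
      calc D * (x - z) ≤ D * (2 * (γ / (4 * D))) := by
            gcongr
            linarith [hz.1]
        _ = γ / 2 := by
            field_simp
            ring
    have := hLip z (x - z) (sub_nonneg.2 hzx)
    rw [add_sub_cancel] at this
    linarith [hv.monotone hg hp n hzx]
  have hcenter : |x - γ / (4 * D)| ≤ R' + γ / (4 * D) :=
    (abs_sub _ _).trans (by rw [abs_of_pos hr]; gcongr)
  have hmem : -δ ∈ upperShifts φ v := hshift hv (n + k) hupper (hspread _ hcenter hball)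
  linarith [hleast.2 hmem]

lemma tendstoUniformly_of_isLeast (hφ : IsStationaryFront g p φ) (hg : IsBistable g)
    (hp : IsKernel p) (hv : IsFrontOrbit g p v) (hleast : IsLeast (upperShifts φ v) 0) :
    TendstoUniformly v φ atTop := by
  have hle : AsymptoticLE v φ := by simpa [upperShifts] using hleast.1
  refine Metric.tendstoUniformly_iff.2 fun ε hε => ?_
  obtain ⟨a, ha⟩ := (hφ.tendsto_atBot.eventually_lt_const hε).exists_forall_of_atBot
  obtain ⟨b, hb⟩ := (hφ.tendsto_atTop.eventually_const_lt
    (sub_lt_self 1 (half_pos hε))).exists_forall_of_atTop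
  filter_upwards [hle _ (half_pos hε), eventually_sub_lt_of_isLeast hφ hg hp hv hleast
    (max |a| |b|) (half_pos hε)] with n hupper hgap x
  rw [Real.dist_eq, abs_lt]
  refine ⟨by linarith [hupper x], ?_⟩
  rcases le_total x a with hxa | hax
  · linarith [ha x hxa, (hv.mem_Icc hg hp n x).1]
  rcases le_total b x with hbx | hxb
  · linarith [hb b le_rfl, hgap b (le_max_right _ _), hv.monotone hg hp n hbx, hφ.le_one x]
  · linarith [hgap x (abs_le_max_abs_abs hax hxb)]

theorem exists_tendstoUniformly_comp_add_const (hφ : IsStationaryFront g p φ) (hg : IsBistable g)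
    (hp : IsKernel p) (hv : IsFrontOrbit g p v) :
    ∃ ξ, TendstoUniformly v (fun x => φ (x + ξ)) atTop := by
  obtain ⟨ξ, hξ⟩ := exists_isLeast_upperShifts hφ hg hp hv
  refine ⟨ξ, tendstoUniformly_of_isLeast (hφ.comp_add_const ξ) hg hp hv ⟨?_, fun ζ hζ => ?_⟩⟩
  · simpa [upperShifts] using hξ.1
  · have : ζ + ξ ∈ upperShifts φ v := by simpa [upperShifts, add_assoc] using hζ
    linarith [hξ.2 this]

end

section

variable {ι : Type*} {l : Filter ι} {F : ι → ℝ → ℝ} {ψ : ℝ → ℝ} {a : ι → ℝ}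

lemma tendsto_iSup_abs_sub_of_tendstoUniformly
    (h : TendstoUniformly (fun i x => F i (x + a i)) ψ l) :
    Tendsto (fun i => ⨆ x, |F i x - ψ (x - a i)|) l (𝓝 0) := by
  refine Metric.tendsto_nhds.2 fun ε hε => ?_
  filter_upwards [Metric.tendstoUniformly_iff.1 h _ (half_pos hε)] with i hi
  have hle : ∀ x, |F i x - ψ (x - a i)| ≤ ε / 2 := fun x => by
    have := (hi (x - a i)).le
    rwa [sub_add_cancel, dist_comm] at this
  rw [Real.dist_0_eq_abs, abs_of_nonneg (Real.iSup_nonneg fun _ => abs_nonneg _)]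
  exact (ciSup_le hle).trans_lt (half_lt_self hε)

lemma tendsto_sInf_superlevel_of_tendstoUniformly (hψ : StrictMono ψ)
    (h : TendstoUniformly (fun i x => F i (x + a i)) ψ l) (z : ℝ) :
    Tendsto (fun i => sInf {x | ψ z ≤ F i x} - a i) l (𝓝 z) := by
  refine Metric.tendsto_nhds.2 fun ε hε => ?_
  have hη : 0 < min (ψ (z + ε / 2) - ψ z) (ψ z - ψ (z - ε / 2)) :=
    lt_min (sub_pos.2 (hψ (by linarith))) (sub_pos.2 (hψ (by linarith)))
  filter_upwards [Metric.tendstoUniformly_iff.1 h _ hη] with i hi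
  simp only [Real.dist_eq, lt_min_iff, abs_lt] at hi
  have hlower : ∀ x ∈ {x | ψ z ≤ F i x}, z - ε / 2 + a i ≤ x := by
    intro x (hx : ψ z ≤ F i x)
    have hx' := hi (x - a i)
    rw [sub_add_cancel] at hx'
    have hψx : ψ (z - ε / 2) < ψ (x - a i) := by linarith
    linarith [hψ.lt_iff_lt.1 hψx]
  have hmem : z + ε / 2 + a i ∈ {x | ψ z ≤ F i x} := by
    change ψ z ≤ F i _
    linarith [hi (z + ε / 2)]
  rw [Real.dist_eq, abs_lt]
  constructor
  · linarith [le_csInf ⟨_, hmem⟩ hlower]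
  · linarith [csInf_le ⟨_, hlower⟩ hmem]

end

/-! ### The moving frame -/

lemma isFrontOrbit_comp_add_mul_const {g q : ℝ → ℝ} {u : ℕ → ℝ → ℝ} (hu : IsFrontOrbit g q u)
    (ℓ : ℝ) : IsFrontOrbit g (qshift q ℓ) fun n x => u n (x + n * ℓ) where
  monotone_zero := by simpa using hu.monotone_zero
  tendsto_atBot_zero := by simpa using hu.tendsto_atBot_zero
  tendsto_atTop_zero := by simpa using hu.tendsto_atTop_zero
  succ n x := by
    rw [hu.succ, conv_qshift, conv_comp_add_const]
    push_cast
    ring_nf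

theorem bistable_recursion_convergence_general {g q φ : ℝ → ℝ} {ℓ : ℝ} {u : ℕ → ℝ → ℝ}
    (hg : IsBistable g) (hq : IsKernel q) (hφ : IsStationaryFront g (qshift q ℓ) φ)
    (hu : IsFrontOrbit g q u) :
    ∃ x₀ : ℝ, Tendsto (fun n : ℕ => ⨆ x, |u n x - φ (x - n * ℓ - x₀)|) atTop (𝓝 0) ∧
      ∀ z, Tendsto (fun n : ℕ => sInf {x | φ z ≤ u n x} - (n * ℓ + x₀)) atTop (𝓝 z) := by
  have hp := isKernel_qshift hq ℓ
  obtain ⟨ξ, hξ⟩ := exists_tendstoUniformly_comp_add_const hφ hg hp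
    (isFrontOrbit_comp_add_mul_const hu ℓ)
  refine ⟨-ξ, by simpa using tendsto_iSup_abs_sub_of_tendstoUniformly hξ, fun z => ?_⟩
  have hψ : StrictMono fun x => φ (x + ξ) := (hφ.comp_add_const ξ).strictMono hg hp
  simpa [sub_add_eq_sub_sub] using
    (tendsto_sInf_superlevel_of_tendstoUniformly hψ hξ (z - ξ)).add_const ξ

/-! ### Piecewise polynomial nonlinearities -/

lemma hasDerivWithinAt_of_eqOn_of_isClosed {f f₁ f' : ℝ → ℝ} {s : Set ℝ} (hs : IsClosed s)
    (h : Set.EqOn f f₁ s) (hf₁ : ∀ x ∈ s, HasDerivAt f₁ (f' x) x) (x : ℝ) :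
    HasDerivWithinAt f (f' x) s x := by
  by_cases hx : x ∈ s
  · exact (hf₁ x hx).hasDerivWithinAt.congr h (h hx)
  · exact HasFDerivWithinAt.of_notMem_closure (by rwa [hs.closure_eq])

namespace BistableSetting

variable (S : BistableSetting)

lemma eqOn_g_Iic : Set.EqOn S.g (fun x => S.P.derivative.eval 0 * x) (Set.Iic 0) := by
  rintro x (hx : x ≤ 0)
  rcases hx.lt_or_eq with hx | rfl
  · rw [g, if_pos hx]
  · simp [g, S.hP0]

lemma eqOn_g_Icc : Set.EqOn S.g (fun x => S.P.eval x) (Set.Icc 0 1) := fun x hx => by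
  rw [g, if_neg hx.1.not_gt, if_pos hx.2]

lemma eqOn_g_Ici :
    Set.EqOn S.g (fun x => 1 + S.P.derivative.eval 1 * (x - 1)) (Set.Ici 1) := by
  rintro x (hx : 1 ≤ x)
  rcases hx.lt_or_eq with hx | rfl
  · rw [g, if_neg (zero_lt_one.trans hx).not_gt, if_neg hx.not_ge]
  · simp [g, S.hP1]

lemma hasDerivAt_g (x : ℝ) : HasDerivAt S.g (S.P.derivative.eval (max 0 (min x 1))) x := by
  have hIic := hasDerivWithinAt_of_eqOn_of_isClosed
    (f' := fun x => S.P.derivative.eval (max 0 (min x 1))) isClosed_Iic S.eqOn_g_Iic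
    (fun y (hy : y ≤ 0) => by
      rw [max_eq_left ((min_le_left _ _).trans hy)]
      exact hasDerivAt_const_mul _) x
  have hIcc := hasDerivWithinAt_of_eqOn_of_isClosed
    (f' := fun x => S.P.derivative.eval (max 0 (min x 1))) isClosed_Icc S.eqOn_g_Icc
    (fun y hy => by
      rw [min_eq_left hy.2, max_eq_right hy.1]
      exact S.P.hasDerivAt y) x
  have hIci := hasDerivWithinAt_of_eqOn_of_isClosed
    (f' := fun x => S.P.derivative.eval (max 0 (min x 1))) isClosed_Ici S.eqOn_g_Ici
    (fun y (hy : 1 ≤ y) => by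
      rw [min_eq_right hy, max_eq_right zero_le_one]
      simpa using (((hasDerivAt_id y).sub_const 1).const_mul _).const_add 1) x
  have hunion := (hIic.union hIcc).union hIci
  rwa [Set.Iic_union_Icc_eq_Iic zero_le_one, Set.Iic_union_Ici, hasDerivWithinAt_univ] at hunion

lemma deriv_g : deriv S.g = fun x => S.P.derivative.eval (max 0 (min x 1)) :=
  funext fun x => (S.hasDerivAt_g x).deriv

lemma eval_derivative_nonneg {x : ℝ} (hx : x ∈ Set.Icc (0 : ℝ) 1) :
    0 ≤ S.P.derivative.eval x := by
  rw [← closure_Ioo zero_ne_one] at hx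
  exact closure_minimal (fun y hy => (S.hP_mono y hy).le)
    (isClosed_le continuous_const S.P.derivative.continuous) hx

lemma isBistable_g : IsBistable S.g where
  contDiff := by
    refine contDiff_one_iff_deriv.2 ⟨fun x => (S.hasDerivAt_g x).differentiableAt, ?_⟩
    rw [deriv_g]
    exact S.P.derivative.continuous.comp (by fun_prop)
  monotone := by
    refine monotone_of_deriv_nonneg (fun x => (S.hasDerivAt_g x).differentiableAt) fun x => ?_
    rw [deriv_g]
    exact S.eval_derivative_nonneg
      ⟨le_max_left _ _, max_le zero_le_one (min_le_right _ _)⟩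
  map_zero := by simp [g, S.hP0]
  map_one := by simp [g, S.hP1]
  deriv_pos t ht := by
    simpa [deriv_g, min_eq_left ht.2.le, max_eq_right ht.1.le] using S.hP_mono t ht
  deriv_zero_lt_one := by simpa [deriv_g] using S.hf'0
  deriv_one_lt_one := by simpa [deriv_g] using S.hf'1

lemma isKernel_q : IsKernel S.q where
  continuous := S.hq_diff.continuous
  hasCompactSupport := S.hq_supp
  nonneg := S.hq_nonneg
  integral_eq_one := S.hq_int

end BistableSetting

lemma IsTravelingWave.isStationaryFront {S : BistableSetting} {ℓ : ℝ} {φ : ℝ → ℝ}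
    (h : IsTravelingWave S ℓ φ) : IsStationaryFront S.g (qshift S.q ℓ) φ where
  monotone := h.mono
  contDiff := h.smooth
  eq_map_conv := h.wave_eq
  tendsto_atBot := h.limit_bot
  tendsto_atTop := h.limit_top

lemma isFrontOrbit_of_heaviside {g q : ℝ → ℝ} {u : ℕ → ℝ → ℝ}
    (h0 : ∀ x, u 0 x = if 0 ≤ x then 1 else 0)
    (hrec : ∀ n x, u (n + 1) x = g (conv q (u n) x)) : IsFrontOrbit g q u where
  monotone_zero x y hxy := by
    rw [h0, h0]
    split_ifs with hx hy
    · exact le_rfl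
    · exact absurd (hx.trans hxy) hy
    · exact zero_le_one
    · exact le_rfl
  tendsto_atBot_zero := tendsto_const_nhds.congr' <| by
    filter_upwards [eventually_lt_atBot 0] with x hx
    rw [h0, if_neg hx.not_ge]
  tendsto_atTop_zero := tendsto_const_nhds.congr' <| by
    filter_upwards [eventually_ge_atTop 0] with x hx
    rw [h0, if_pos hx]
  succ := hrec

/-- Convergence to the traveling wave: for the bistable recursion started from a step
initial condition there is `x₀ ∈ ℝ` such that `sup_x |u_n(x) - φ(x - nℓ - x₀)| → 0`;
consequently the medians satisfy `med_n = nℓ + x₀ + o(1)`. -/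
theorem bistable_recursion_convergence (S : BistableSetting) (ℓ : ℝ) (φ : ℝ → ℝ)
    (h : IsTravelingWave S ℓ φ) (hnorm : φ 0 = 1 / 2) (u : ℕ → ℝ → ℝ)
    (h0 : ∀ x : ℝ, u 0 x = if 0 ≤ x then 1 else 0)
    (hrec : ∀ (n : ℕ) (x : ℝ), u (n + 1) x = S.g (conv S.q (u n) x)) :
    ∃ x₀ : ℝ,
      Tendsto (fun n : ℕ => ⨆ x : ℝ, |u n x - φ (x - n * ℓ - x₀)|) atTop (𝓝 0) ∧
      Tendsto (fun n : ℕ => sInf {x : ℝ | 1 / 2 ≤ u n x} - (n * ℓ + x₀)) atTop (𝓝 0) := by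
  obtain ⟨x₀, hconv, hlevel⟩ := bistable_recursion_convergence_general S.isBistable_g
    S.isKernel_q h.isStationaryFront (isFrontOrbit_of_heaviside h0 hrec)
  exact ⟨x₀, hconv, hnorm ▸ hlevel 0⟩
end

section
/- Let φ be a traveling wave with speed ℓ. There exists δ_0 > 0 with the following property: if ξ_0^−, ξ_0^+ ∈ ℝ, 0 ≤ β_0 ≤ δ_0, and (u_n)_{n≥0} is a sequence of bounded measurable functions satisfying u_{n+1}(x) = g((q_ℓ * u_n)(x)) for all n ≥ 0 and x ∈ ℝ, with φ(x + ξ_0^−) − β_0 ≤ u_0(x) ≤ φ(x + ξ_0^+) + β_0 for all x ∈ ℝ, then there exist ξ̄ ∈ ℝ and a strictly increasing sequence of integers n_k → ∞ such that sup_{x∈ℝ} |u_{n_k}(x) − φ(x + ξ̄)| → 0 as k → ∞; that is, the ω-limit set of the orbit (u_n) contains a shift of the traveling wave. -/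
open MeasureTheory Filter Topology

/-!
In the tails the stability of the end states contracts errors, and on the remaining compact set
`φ' > 0`, so a translation of the wave `φ` absorbs them: an orbit that starts between two translates
of `φ` up to `β` stays between two translates up to `β μⁿ`, with `μ < 1`. Convolution makes the
orbit equicontinuous and the barriers control its tails, so it has uniform limits. Let `B` be the
infimum of the shifts `b` such that `φ(· + b)` dominates the orbit asymptotically; every limit
`w` satisfies `w ≤ φ(· + B)`. If the inequality were strict somewhere, the strong comparison
principle would make it strict on any given compact set after finitely many steps. Moving
`φ(· + B)` slightly back would then cost an error only in the tails, where `φ'` is small, and the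
barriers would convert that error into a shift smaller than the one gained, contradicting the choice
of `B`. Hence `w = φ(· + B)`.
-/

/-- Bounded measurable functions on the line: the class of states on which the recursion acts. -/
structure BoundedMeasurable (u : ℝ → ℝ) : Prop where
  measurable : Measurable u
  bounded : ∃ C, ∀ x, |u x| ≤ C

namespace BoundedMeasurable

variable {u v : ℝ → ℝ}

theorem const (c : ℝ) : BoundedMeasurable fun _ => c :=
  ⟨measurable_const, |c|, fun _ => le_rfl⟩

theorem add (hu : BoundedMeasurable u) (hv : BoundedMeasurable v) :
    BoundedMeasurable fun x => u x + v x := by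
  obtain ⟨C, hC⟩ := hu.bounded
  obtain ⟨D, hD⟩ := hv.bounded
  exact ⟨hu.measurable.add hv.measurable, C + D,
    fun x => (abs_add_le _ _).trans (add_le_add (hC x) (hD x))⟩

theorem comp_add_right (hu : BoundedMeasurable u) (b : ℝ) :
    BoundedMeasurable fun x => u (x + b) := by
  obtain ⟨C, hC⟩ := hu.bounded
  exact ⟨hu.measurable.comp (measurable_add_const b), C, fun x => hC (x + b)⟩

theorem of_le_of_le {lo hi : ℝ → ℝ} (hlo : BoundedMeasurable lo) (hhi : BoundedMeasurable hi)
    (hu : Measurable u) (h : ∀ x, lo x ≤ u x ∧ u x ≤ hi x) : BoundedMeasurable u := by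
  obtain ⟨C, hC⟩ := hlo.bounded
  obtain ⟨D, hD⟩ := hhi.bounded
  exact ⟨hu, max C D, fun x => (abs_le_max_abs_abs (h x).1 (h x).2).trans
    (max_le_max (hC x) (hD x))⟩

end BoundedMeasurable

section Conv

variable {k u v : ℝ → ℝ}

theorem integrable_mul_comp_sub (hk : Integrable k) (hu : BoundedMeasurable u) (x : ℝ) :
    Integrable fun y => k y * u (x - y) := by
  obtain ⟨C, hC⟩ := hu.bounded
  refine hk.mul_bdd (c := C) ?_ (.of_forall fun y => hC (x - y))
  exact (hu.measurable.comp (measurable_const.sub measurable_id)).aestronglyMeasurable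

theorem conv_eq_integral_comp_sub_mul (k u : ℝ → ℝ) (x : ℝ) :
    conv k u x = ∫ y, k (x - y) * u y := by
  simpa [conv] using (integral_sub_left_eq_self (fun y => k y * u (x - y)) volume x).symm

theorem conv_comp_add_right (k u : ℝ → ℝ) (b x : ℝ) :
    conv k (fun y => u (y + b)) x = conv k u (x + b) := by
  simp only [conv, add_sub_right_comm]

theorem conv_const (k : ℝ → ℝ) (c x : ℝ) : conv k (fun _ => c) x = (∫ y, k y) * c :=
  integral_mul_const c k

theorem conv_add (hk : Integrable k) (hu : BoundedMeasurable u) (hv : BoundedMeasurable v)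
    (x : ℝ) : conv k (fun y => u y + v y) x = conv k u x + conv k v x := by
  simp only [conv, mul_add]
  exact integral_add (integrable_mul_comp_sub hk hu x) (integrable_mul_comp_sub hk hv x)

theorem conv_le_conv {x : ℝ} (hk : Integrable k) (hk0 : ∀ y, 0 ≤ k y) (hu : BoundedMeasurable u)
    (hv : BoundedMeasurable v) (h : ∀ y, k y ≠ 0 → u (x - y) ≤ v (x - y)) :
    conv k u x ≤ conv k v x := by
  refine integral_mono (integrable_mul_comp_sub hk hu x) (integrable_mul_comp_sub hk hv x)
    fun y => ?_
  by_cases hy : k y = 0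
  · simp [hy]
  · exact mul_le_mul_of_nonneg_left (h y hy) (hk0 y)

theorem conv_pos (hk : Continuous k) (hks : HasCompactSupport k) (hk0 : ∀ y, 0 ≤ k y)
    (hu : Continuous u) (hu0 : ∀ x, 0 ≤ u x) {x s : ℝ} (hs : 0 < k s) (hx : 0 < u (x - s)) :
    0 < conv k u x :=
  Continuous.integral_pos_of_hasCompactSupport_nonneg_nonzero (x := s)
    (hk.mul (hu.comp (continuous_const.sub continuous_id))) hks.mul_right
    (fun y => mul_nonneg (hk0 y) (hu0 _)) (mul_pos hs hx).ne'

theorem tendsto_conv {ι : Type*} {l : Filter ι} [l.IsCountablyGenerated] {C c : ℝ} {x : ι → ℝ}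
    (hk : Integrable k) (hu : Measurable u) (hC : ∀ x, |u x| ≤ C)
    (hlim : ∀ y, Tendsto (fun i => u (x i - y)) l (𝓝 c)) :
    Tendsto (fun i => conv k u (x i)) l (𝓝 ((∫ y, k y) * c)) := by
  rw [← integral_mul_const]
  refine tendsto_integral_filter_of_dominated_convergence (fun y => ‖k y‖ * C)
    (.of_forall fun i => (integrable_mul_comp_sub hk ⟨hu, C, hC⟩ (x i)).aestronglyMeasurable)
    (.of_forall fun i => .of_forall fun y => ?_) (hk.norm.mul_const C)
    (.of_forall fun y => (hlim y).const_mul (k y))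
  rw [norm_mul]
  exact mul_le_mul_of_nonneg_left (hC _) (norm_nonneg _)

theorem abs_conv_le (hk : Integrable k) {C : ℝ} (hC : ∀ x, |u x| ≤ C) (x : ℝ) :
    |conv k u x| ≤ (∫ y, |k y|) * C := by
  rw [← integral_mul_const, ← Real.norm_eq_abs]
  refine norm_integral_le_of_norm_le (hk.abs.mul_const C) (.of_forall fun y => ?_)
  rw [norm_mul]
  exact mul_le_mul_of_nonneg_left (hC _) (norm_nonneg _)

theorem abs_conv_sub_conv_le {ε : ℝ} (hk : Integrable k) (hu : BoundedMeasurable u)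
    (hv : BoundedMeasurable v) (h : ∀ x, |u x - v x| ≤ ε) (x : ℝ) :
    |conv k u x - conv k v x| ≤ (∫ y, |k y|) * ε := by
  have hsub : conv k u x - conv k v x = conv k (fun y => u y - v y) x := by
    simp only [conv, mul_sub]
    exact (integral_sub (integrable_mul_comp_sub hk hu x) (integrable_mul_comp_sub hk hv x)).symm
  exact hsub ▸ abs_conv_le hk h x

theorem abs_conv_sub_conv_le_integral {C : ℝ} (hk : Integrable k) (hu : Measurable u)
    (hC : ∀ x, |u x| ≤ C) (x x' : ℝ) :
    |conv k u x - conv k u x'| ≤ (∫ y, |k (y + (x - x')) - k y|) * C := by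
  have hint : ∀ z, Integrable fun y => k (z - y) * u y := fun z => by
    simpa using (integrable_mul_comp_sub hk ⟨hu, C, hC⟩ z).comp_sub_left z
  have hshift : ∫ y, |k (y + (x - x')) - k y| = ∫ y, |k (x - y) - k (x' - y)| := by
    rw [← integral_sub_left_eq_self _ volume x']
    congr! 5
    ring
  rw [conv_eq_integral_comp_sub_mul, conv_eq_integral_comp_sub_mul,
    ← integral_sub (hint x) (hint x'), hshift, ← integral_mul_const, ← Real.norm_eq_abs]
  refine norm_integral_le_of_norm_le
    (((hk.comp_sub_left x).sub (hk.comp_sub_left x')).abs.mul_const C) (.of_forall fun y => ?_)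
  rw [← sub_mul, norm_mul]
  exact mul_le_mul_of_nonneg_left (hC _) (norm_nonneg _)

theorem tendsto_integral_abs_comp_add_sub (hk : Continuous k) (hks : HasCompactSupport k) :
    Tendsto (fun h => ∫ y, |k (y + h) - k y|) (𝓝 0) (𝓝 0) := by
  have hcont : ContinuousOn (fun h => ∫ y, |k (y + h) - k y|) (Metric.closedBall 0 1) := by
    refine continuousOn_integral_of_compact_support (hks.isCompact.cthickening (r := 1))
      (by fun_prop) fun h y hh hy => ?_
    have hmem : ∀ t ∈ Metric.closedBall (0 : ℝ) 1, k (y + t) = 0 := fun t ht => by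
      by_contra hne
      refine hy (Metric.mem_cthickening_of_dist_le y (y + t) 1 _ (subset_tsupport k hne) ?_)
      simpa [Real.dist_eq] using ht
    have hy0 := hmem 0 (by simp)
    rw [add_zero] at hy0
    simp [hmem h hh, hy0]
  simpa using (hcont.continuousAt (Metric.closedBall_mem_nhds 0 one_pos)).tendsto

theorem uniformEquicontinuous_conv {ι : Type*} {v : ι → ℝ → ℝ} {C : ℝ} (hk : Continuous k)
    (hks : HasCompactSupport k) (hv : ∀ i, Measurable (v i)) (hC : ∀ i x, |v i x| ≤ C) :
    UniformEquicontinuous fun i => conv k (v i) := by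
  have hlim := (tendsto_integral_abs_comp_add_sub hk hks).mul_const C
  rw [zero_mul] at hlim
  refine Metric.uniformEquicontinuous_iff.2 fun ε hε => ?_
  obtain ⟨δ, hδ, hmod⟩ := Metric.eventually_nhds_iff.1 (hlim.eventually_lt_const hε)
  refine ⟨δ, hδ, fun x x' hx i => ?_⟩
  refine (abs_conv_sub_conv_le_integral (hk.integrable_of_hasCompactSupport hks) (hv i) (hC i)
    x x').trans_lt (hmod ?_)
  simpa [Real.dist_eq] using hx

theorem continuous_conv (hk : Continuous k) (hks : HasCompactSupport k)
    (hu : BoundedMeasurable u) : Continuous (conv k u) := by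
  obtain ⟨C, hC⟩ := hu.bounded
  exact ((uniformEquicontinuous_conv (ι := Unit) hk hks (fun _ => hu.measurable)
    fun _ => hC).uniformContinuous ()).continuous

theorem hasDerivAt_conv (hk : Continuous k) (hks : HasCompactSupport k) (hu : ContDiff ℝ 1 u)
    (x : ℝ) : HasDerivAt (conv k u) (conv k (deriv u) x) x := by
  have hu' : Continuous (deriv u) := hu.continuous_deriv le_rfl
  have hcomp : ∀ {w : ℝ → ℝ}, Continuous w → ∀ z, Continuous fun y => k y * w (z - y) :=
    fun hw z => hk.mul (hw.comp (continuous_const.sub continuous_id))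
  obtain ⟨D, hD⟩ := ((isCompact_closedBall x 1).prod hks.isCompact).exists_bound_of_continuousOn
    (f := fun p => deriv u (p.1 - p.2)) (by fun_prop)
  refine (hasDerivAt_integral_of_dominated_loc_of_deriv_le (bound := fun y => ‖k y‖ * D)
    (F' := fun z y => k y * deriv u (z - y)) (Metric.closedBall_mem_nhds x one_pos)
    (.of_forall fun z => (hcomp hu.continuous z).aestronglyMeasurable)
    ((hcomp hu.continuous x).integrable_of_hasCompactSupport hks.mul_right)
    (hcomp hu' x).aestronglyMeasurable (.of_forall fun y z hz => ?_)
    ((hk.integrable_of_hasCompactSupport hks).norm.mul_const D)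
    (.of_forall fun y z _ => ?_)).2
  · by_cases hy : y ∈ tsupport k
    · rw [norm_mul]
      exact mul_le_mul_of_nonneg_left (hD (z, y) ⟨hz, hy⟩) (norm_nonneg _)
    · simp [image_eq_zero_of_notMem_tsupport hy]
  · exact ((hu.differentiable one_ne_zero _).hasDerivAt.comp_sub_const z y).const_mul (k y)

theorem exists_conv_deriv_le (hk : Continuous k) (hks : HasCompactSupport k)
    (hu : ContDiff ℝ 1 u) (hmono : Monotone u) :
    ∃ Q R, ∀ x, conv k (deriv u) x ≤ Q * (u (x + R) - u (x - R)) := by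
  obtain ⟨Q, hQ⟩ := hks.exists_bound_of_continuous hk
  obtain ⟨R, hR, hRk⟩ := hks.isCompact.isBounded.exists_pos_norm_lt
  have hu' : Continuous (deriv u) := hu.continuous_deriv le_rfl
  refine ⟨Q, R, fun x => ?_⟩
  have hsupp : (Function.support fun y => k y * deriv u (x - y)) ⊆ Set.Ioc (-R) R := fun y hy => by
    have := abs_lt.1 (hRk y (subset_tsupport k (left_ne_zero_of_mul hy)))
    exact ⟨this.1, this.2.le⟩
  calc conv k (deriv u) x = ∫ y in -R..R, k y * deriv u (x - y) :=
        (intervalIntegral.integral_eq_integral_of_support_subset hsupp).symm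
    _ ≤ ∫ y in -R..R, Q * deriv u (x - y) := by
        refine intervalIntegral.integral_mono_on (by linarith)
          (Continuous.intervalIntegrable (by fun_prop) _ _)
          (Continuous.intervalIntegrable (by fun_prop) _ _) fun y _ => ?_
        exact mul_le_mul_of_nonneg_right ((le_abs_self _).trans (hQ y)) hmono.deriv_nonneg
    _ = Q * (u (x + R) - u (x - R)) := by
        rw [intervalIntegral.integral_const_mul, intervalIntegral.integral_comp_sub_left,
          intervalIntegral.integral_deriv_eq_sub
            (fun _ _ => hu.differentiable one_ne_zero _) (hu'.intervalIntegrable _ _),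
          sub_neg_eq_add]

end Conv

section Propagation

/-- The integer `i` is the number of forward steps of an `n`-step walk with steps `p` and `-r` that
ends within `p + r` of `z`; the remaining gap is spread evenly over the `n` steps. -/
theorem exists_nat_forall_eq_mul_add_mul {p r η : ℝ} (hp : 0 < p) (hr : 0 < r) (hη : 0 < η)
    (M : ℝ) : ∃ n : ℕ, ∀ z, |z| ≤ M → ∃ i j : ℕ, ∃ e, i + j = n ∧ |e| < η ∧
      z = i * (p + e) + j * (-r + e) := by
  obtain ⟨n, hn⟩ := exists_nat_gt (max ((p + r) / η) (max (M / p) (M / r)))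
  obtain ⟨hnη, hnp, hnr⟩ : (p + r) / η < n ∧ M / p < n ∧ M / r < n := by
    simpa only [max_lt_iff] using hn
  have hn0 : 0 < (n : ℝ) := lt_trans (by positivity) hnη
  rw [div_lt_iff₀ hη] at hnη
  rw [div_lt_iff₀ hp] at hnp
  rw [div_lt_iff₀ hr] at hnr
  refine ⟨n, fun z hz => ?_⟩
  obtain ⟨hz1, hz2⟩ := abs_le.1 hz
  set t := (z + n * r) / (p + r)
  have ht0 : 0 ≤ t := div_nonneg (by linarith) (by linarith)
  have htn : t ≤ n := (div_le_iff₀ (by linarith)).2 (by linarith)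
  have htz : t * (p + r) = z + n * r := div_mul_cancel₀ _ (by linarith)
  have hfloor : (⌊t⌋₊ : ℝ) ≤ t := Nat.floor_le ht0
  have hfract : t - ⌊t⌋₊ < 1 := sub_left_lt_of_lt_add (Nat.lt_floor_add_one t)
  have hle : ⌊t⌋₊ ≤ n := by exact_mod_cast hfloor.trans htn
  have he : (t - ⌊t⌋₊) * (p + r) / n * n = (t - ⌊t⌋₊) * (p + r) := div_mul_cancel₀ _ hn0.ne'
  refine ⟨⌊t⌋₊, n - ⌊t⌋₊, (t - ⌊t⌋₊) * (p + r) / n, Nat.add_sub_cancel' hle, ?_, ?_⟩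
  · rw [abs_of_nonneg (div_nonneg (mul_nonneg (by linarith) (by linarith)) hn0.le),
      div_lt_iff₀ hn0]
    nlinarith
  · rw [Nat.cast_sub hle]
    linear_combination -htz - he

theorem add_mul_add_mul_mem {A : Set ℝ} {U : ℕ → Set ℝ} {x₀ s t : ℝ}
    (hU : ∀ n, ∀ y ∈ U n, ∀ s ∈ A, y + s ∈ U (n + 1)) (h0 : x₀ ∈ U 0) (hs : s ∈ A) (ht : t ∈ A)
    (i j : ℕ) : x₀ + (i * s + j * t) ∈ U (i + j) := by
  induction j with
  | zero =>
    induction i with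
    | zero => simpa using h0
    | succ i ih => simpa [add_mul, add_assoc] using hU _ _ ih s hs
  | succ j ih => simpa [add_mul, add_assoc] using hU _ _ ih t ht

theorem exists_subset_of_forall_add_mem {A : Set ℝ} {U : ℕ → Set ℝ} {p r x₀ : ℝ} (hA : IsOpen A)
    (hp : 0 < p) (hr : 0 < r) (hpA : p ∈ A) (hrA : -r ∈ A)
    (hU : ∀ n, ∀ y ∈ U n, ∀ s ∈ A, y + s ∈ U (n + 1)) (h0 : x₀ ∈ U 0) {C : Set ℝ}
    (hC : Bornology.IsBounded C) : ∃ n, C ⊆ U n := by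
  have hnear : ∀ᶠ e in 𝓝 (0 : ℝ), p + e ∈ A ∧ -r + e ∈ A := by
    refine ((continuous_const.add continuous_id).continuousAt.eventually_mem ?_).and
      ((continuous_const.add continuous_id).continuousAt.eventually_mem ?_) <;>
    simpa using hA.mem_nhds ‹_›
  obtain ⟨η, hη, hηA⟩ := Metric.eventually_nhds_iff.1 hnear
  obtain ⟨M, hM⟩ := hC.subset_closedBall x₀
  obtain ⟨n, hn⟩ := exists_nat_forall_eq_mul_add_mul hp hr hη M
  refine ⟨n, fun x hx => ?_⟩
  obtain ⟨i, j, e, rfl, he, hxe⟩ := hn (x - x₀) (by simpa [Real.dist_eq] using hM hx)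
  obtain ⟨hs, ht⟩ := hηA (by simpa using he : dist e 0 < η)
  rw [← add_sub_cancel x₀ x, hxe]
  exact add_mul_add_mul_mem hU h0 hs ht i j

end Propagation

section RecursionOp

/-- Continuous compactly supported probability densities: the dispersal kernels. -/
structure IsCompactDensity (k : ℝ → ℝ) : Prop where
  continuous : Continuous k
  hasCompactSupport : HasCompactSupport k
  nonneg : ∀ y, 0 ≤ k y
  integral_eq_one : ∫ y, k y = 1

/-- The operator `u ↦ g(k * u)` whose iterates are the orbits of the recursion. -/
noncomputable def recursionOp (g k u : ℝ → ℝ) (x : ℝ) : ℝ := g (conv k u x)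

variable {g k u v w : ℝ → ℝ}

namespace IsCompactDensity

theorem integrable (hk : IsCompactDensity k) : Integrable k :=
  hk.continuous.integrable_of_hasCompactSupport hk.hasCompactSupport

theorem conv_const (hk : IsCompactDensity k) (c x : ℝ) : conv k (fun _ => c) x = c := by
  rw [_root_.conv_const, hk.integral_eq_one, one_mul]

theorem conv_add_const (hk : IsCompactDensity k) (hu : BoundedMeasurable u) (c x : ℝ) :
    conv k (fun y => u y + c) x = conv k u x + c := by
  rw [conv_add hk.integrable hu (.const c), hk.conv_const]

theorem conv_mono (hk : IsCompactDensity k) (hu : BoundedMeasurable u)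
    (hv : BoundedMeasurable v) (h : ∀ x, u x ≤ v x) (x : ℝ) : conv k u x ≤ conv k v x :=
  conv_le_conv hk.integrable hk.nonneg hu hv fun _ _ => h _

end IsCompactDensity

theorem recursionOp_comp_add_right (g k u : ℝ → ℝ) (b : ℝ) :
    recursionOp g k (fun x => u (x + b)) = fun x => recursionOp g k u (x + b) :=
  funext fun x => congrArg g (conv_comp_add_right k u b x)

theorem recursionOp_const (hk : IsCompactDensity k) {c : ℝ} (hc : g c = c) :
    recursionOp g k (fun _ => c) = fun _ => c :=
  funext fun x => by rw [recursionOp, hk.conv_const, hc]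

theorem continuous_recursionOp (hk : IsCompactDensity k) (hg : Continuous g)
    (hu : BoundedMeasurable u) : Continuous (recursionOp g k u) :=
  hg.comp (continuous_conv hk.continuous hk.hasCompactSupport hu)

theorem BoundedMeasurable.recursionOp (hk : IsCompactDensity k) (hg : Continuous g)
    (hu : BoundedMeasurable u) : BoundedMeasurable (recursionOp g k u) := by
  obtain ⟨C, hC⟩ := hu.bounded
  obtain ⟨D, hD⟩ := (isCompact_closedBall (0 : ℝ) ((∫ y, |k y|) * C)).exists_bound_of_continuousOn
    hg.continuousOn
  refine ⟨(continuous_recursionOp hk hg hu).measurable, D, fun x => hD _ ?_⟩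
  simpa using abs_conv_le hk.integrable hC x

theorem BoundedMeasurable.iterate_recursionOp (hk : IsCompactDensity k) (hg : Continuous g)
    (hu : BoundedMeasurable u) (n : ℕ) : BoundedMeasurable ((_root_.recursionOp g k)^[n] u) :=
  n.rec hu fun n ih => Function.iterate_succ_apply' (_root_.recursionOp g k) n u ▸
    ih.recursionOp hk hg

theorem recursionOp_mono (hk : IsCompactDensity k) (hg : Monotone g) (hu : BoundedMeasurable u)
    (hv : BoundedMeasurable v) (h : ∀ x, u x ≤ v x) (x : ℝ) :
    recursionOp g k u x ≤ recursionOp g k v x :=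
  hg (hk.conv_mono hu hv h x)

theorem seq_le_seq_of_recursionOp {a b : ℕ → ℝ → ℝ} (hk : IsCompactDensity k) (hg : Monotone g)
    (ha : ∀ n, BoundedMeasurable (a n)) (hb : ∀ n, BoundedMeasurable (b n))
    (ha_sub : ∀ n x, a (n + 1) x ≤ recursionOp g k (a n) x)
    (hb_super : ∀ n x, recursionOp g k (b n) x ≤ b (n + 1) x)
    (h0 : ∀ x, a 0 x ≤ b 0 x) (n : ℕ) : ∀ x, a n x ≤ b n x := by
  induction n with
  | zero => exact h0
  | succ n ih => exact fun x =>
      (ha_sub n x).trans ((recursionOp_mono hk hg (ha n) (hb n) ih x).trans (hb_super n x))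

theorem tendstoUniformly_conv {ι : Type*} {F : Filter ι} {a : ι → ℝ → ℝ} (hk : Integrable k)
    (ha : ∀ i, BoundedMeasurable (a i)) (hw : BoundedMeasurable w)
    (h : TendstoUniformly a w F) : TendstoUniformly (fun i => conv k (a i)) (conv k w) F := by
  have hK : 0 < (∫ y, |k y|) + 1 :=
    add_pos_of_nonneg_of_pos (integral_nonneg fun _ => abs_nonneg _) one_pos
  refine Metric.tendstoUniformly_iff.2 fun ε hε => ?_
  filter_upwards [Metric.tendstoUniformly_iff.1 h (ε / ((∫ y, |k y|) + 1)) (div_pos hε hK)]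
    with i hi x
  calc |conv k w x - conv k (a i) x| ≤ (∫ y, |k y|) * (ε / ((∫ y, |k y|) + 1)) :=
        abs_conv_sub_conv_le hk hw (ha i) (fun y => (hi y).le) x
    _ < ε := by
        rw [mul_div_assoc', div_lt_iff₀ hK]
        linarith

theorem tendstoUniformly_recursionOp {ι : Type*} {F : Filter ι} {a : ι → ℝ → ℝ}
    (hk : Integrable k) (hg : Continuous g) (ha : ∀ i, BoundedMeasurable (a i))
    (hw : BoundedMeasurable w) (h : TendstoUniformly a w F) :
    TendstoUniformly (fun i => recursionOp g k (a i)) (recursionOp g k w) F := by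
  obtain ⟨C, hC⟩ := hw.bounded
  have hconv := tendstoUniformly_conv hk ha hw h
  have hw_le := abs_conv_le hk hC
  refine UniformContinuousOn.comp_tendstoUniformly_eventually
    (s := Metric.closedBall 0 ((∫ y, |k y|) * C + 1)) ?_ (fun x => ?_)
    ((isCompact_closedBall _ _).uniformContinuousOn_of_continuous hg.continuousOn) hconv
  · filter_upwards [Metric.tendstoUniformly_iff.1 hconv 1 one_pos] with i hi x
    have hdist := (abs_lt.1 (hi x))
    have hle := abs_le.1 (hw_le x)
    rw [mem_closedBall_zero_iff, Real.norm_eq_abs, abs_le]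
    constructor <;> linarith
  · rw [mem_closedBall_zero_iff, Real.norm_eq_abs]
    linarith [hw_le x]

theorem tendstoUniformly_iterate_recursionOp {ι : Type*} {F : Filter ι} {a : ι → ℝ → ℝ}
    (hk : IsCompactDensity k) (hg : Continuous g) (ha : ∀ i, BoundedMeasurable (a i))
    (hw : BoundedMeasurable w) (h : TendstoUniformly a w F) (n : ℕ) :
    TendstoUniformly (fun i => (recursionOp g k)^[n] (a i)) ((recursionOp g k)^[n] w) F := by
  induction n with
  | zero => exact h
  | succ n ih =>
    simp only [Function.iterate_succ_apply']
    exact tendstoUniformly_recursionOp hk.integrable hg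
      (fun i => (ha i).iterate_recursionOp hk hg n) (hw.iterate_recursionOp hk hg n) ih

theorem uniformEquicontinuous_recursionOp {ι : Type*} {a : ι → ℝ → ℝ} {C : ℝ}
    (hk : IsCompactDensity k) (hg : Continuous g) (ha : ∀ i, Measurable (a i))
    (hC : ∀ i x, |a i x| ≤ C) : UniformEquicontinuous fun i => recursionOp g k (a i) := by
  have hconv := Metric.uniformEquicontinuous_iff.1
    (uniformEquicontinuous_conv hk.continuous hk.hasCompactSupport ha hC)
  have hmem : ∀ i x, conv k (a i) x ∈ Metric.closedBall 0 ((∫ y, |k y|) * C) := fun i x => by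
    simpa using abs_conv_le hk.integrable (hC i) x
  have hgu := Metric.uniformContinuousOn_iff.1
    ((isCompact_closedBall (0 : ℝ) ((∫ y, |k y|) * C)).uniformContinuousOn_of_continuous
      hg.continuousOn)
  refine Metric.uniformEquicontinuous_iff.2 fun ε hε => ?_
  obtain ⟨η, hη, hgη⟩ := hgu ε hε
  obtain ⟨δ, hδ, hconvδ⟩ := hconv η hη
  exact ⟨δ, hδ, fun x x' hx i => hgη _ (hmem i x) _ (hmem i x') (hconvδ x x' hx i)⟩

theorem recursionOp_lt (hk : IsCompactDensity k) (hg : StrictMonoOn g (Set.Icc 0 1))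
    (hu : Continuous u) (hv : Continuous v) (hu0 : ∀ x, 0 ≤ u x) (huv : ∀ x, u x ≤ v x)
    (hv1 : ∀ x, v x ≤ 1) {y s : ℝ} (hs : 0 < k s) (hy : u y < v y) :
    recursionOp g k u (y + s) < recursionOp g k v (y + s) := by
  have hbu : BoundedMeasurable u := .of_le_of_le (.const 0) (.const 1) hu.measurable
    fun x => ⟨hu0 x, (huv x).trans (hv1 x)⟩
  have hbv : BoundedMeasurable v := .of_le_of_le (.const 0) (.const 1) hv.measurable
    fun x => ⟨(hu0 x).trans (huv x), hv1 x⟩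
  have hd : BoundedMeasurable fun x => v x - u x := .of_le_of_le (.const 0) (.const 1)
    (hv.sub hu).measurable fun x => ⟨sub_nonneg.2 (huv x), by linarith [hu0 x, hv1 x]⟩
  have hpos : 0 < conv k (fun x => v x - u x) (y + s) :=
    conv_pos hk.continuous hk.hasCompactSupport hk.nonneg (hv.sub hu)
      (fun x => sub_nonneg.2 (huv x)) hs (by simpa using hy)
  have hadd := conv_add hk.integrable hbu hd (y + s)
  simp only [add_sub_cancel] at hadd
  have h0 := hk.conv_mono (.const 0) hbu hu0 (y + s)
  have h1 := hk.conv_mono hbv (.const 1) hv1 (y + s)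
  rw [hk.conv_const] at h0 h1
  exact hg ⟨h0, by linarith⟩ ⟨by linarith, h1⟩ (by linarith)

end RecursionOp

section Orbits

variable {g k u v : ℝ → ℝ}

theorem continuous_iterate_recursionOp (hk : IsCompactDensity k) (hg : Continuous g)
    (hu : Continuous u) (hbu : BoundedMeasurable u) (n : ℕ) :
    Continuous ((recursionOp g k)^[n] u) := by
  cases n with
  | zero => exact hu
  | succ n =>
    rw [Function.iterate_succ_apply']
    exact continuous_recursionOp hk hg (hbu.iterate_recursionOp hk hg n)

theorem iterate_recursionOp_mono (hk : IsCompactDensity k) (hg : Monotone g) (hgc : Continuous g)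
    (hu : BoundedMeasurable u) (hv : BoundedMeasurable v) (h : ∀ x, u x ≤ v x) (n : ℕ) :
    ∀ x, (recursionOp g k)^[n] u x ≤ (recursionOp g k)^[n] v x :=
  seq_le_seq_of_recursionOp (a := fun n => (recursionOp g k)^[n] u)
    (b := fun n => (recursionOp g k)^[n] v) hk hg (hu.iterate_recursionOp hk hgc)
    (hv.iterate_recursionOp hk hgc)
    (fun n x => (congrFun (Function.iterate_succ_apply' _ n u) x).le)
    (fun n x => (congrFun (Function.iterate_succ_apply' _ n v) x).ge) h n

theorem eq_iterate_recursionOp {u : ℕ → ℝ → ℝ}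
    (hu : ∀ n x, u (n + 1) x = recursionOp g k (u n) x) (n : ℕ) :
    u n = (recursionOp g k)^[n] (u 0) := by
  induction n with
  | zero => rfl
  | succ n ih => rw [Function.iterate_succ_apply', ← ih, funext (hu n)]

/-- Kernels that move mass both forwards and backwards, so that positivity spreads over the whole
line. -/
def ChargesBothSides (k : ℝ → ℝ) : Prop := ∃ p > 0, ∃ r > 0, 0 < k p ∧ 0 < k (-r)

theorem ChargesBothSides.exists_subset {U : ℕ → Set ℝ} {x₀ : ℝ} (hkc : ChargesBothSides k)
    (hk : Continuous k) (hU : ∀ n, ∀ y ∈ U n, ∀ s, 0 < k s → y + s ∈ U (n + 1)) (h0 : x₀ ∈ U 0)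
    {C : Set ℝ} (hC : Bornology.IsBounded C) : ∃ n, C ⊆ U n := by
  obtain ⟨p, hp, r, hr, hkp, hkr⟩ := hkc
  exact exists_subset_of_forall_add_mem (A := {s | 0 < k s}) (isOpen_lt continuous_const hk)
    hp hr hkp hkr hU h0 hC

theorem exists_iterate_recursionOp_lt (hk : IsCompactDensity k) (hkc : ChargesBothSides k)
    (hg : Monotone g) (hgc : Continuous g) (hgs : StrictMonoOn g (Set.Icc 0 1)) (hg0 : g 0 = 0)
    (hg1 : g 1 = 1) (hu : Continuous u) (hv : Continuous v) (hu0 : ∀ x, 0 ≤ u x)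
    (huv : ∀ x, u x ≤ v x) (hv1 : ∀ x, v x ≤ 1) {x₀ : ℝ} (hx₀ : u x₀ < v x₀) {C : Set ℝ}
    (hC : Bornology.IsBounded C) :
    ∃ n, ∀ x ∈ C, (recursionOp g k)^[n] u x < (recursionOp g k)^[n] v x := by
  have hbu : BoundedMeasurable u := .of_le_of_le (.const 0) (.const 1) hu.measurable
    fun x => ⟨hu0 x, (huv x).trans (hv1 x)⟩
  have hbv : BoundedMeasurable v := .of_le_of_le (.const 0) (.const 1) hv.measurable
    fun x => ⟨(hu0 x).trans (huv x), hv1 x⟩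
  refine hkc.exists_subset
    (U := fun n => {x | (recursionOp g k)^[n] u x < (recursionOp g k)^[n] v x}) hk.continuous
    (fun n y hy s hs => ?_) hx₀ hC
  have h0 := iterate_recursionOp_mono hk hg hgc (.const 0) hbu hu0 n
  have h1 := iterate_recursionOp_mono hk hg hgc hbv (.const 1) hv1 n
  rw [Function.iterate_fixed (recursionOp_const hk hg0)] at h0
  rw [Function.iterate_fixed (recursionOp_const hk hg1)] at h1
  simp only [Set.mem_ofPred_eq, Function.iterate_succ_apply']
  exact recursionOp_lt hk hgs (continuous_iterate_recursionOp hk hgc hu hbu n)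
    (continuous_iterate_recursionOp hk hgc hv hbv n) h0
    (iterate_recursionOp_mono hk hg hgc hbu hbv huv n) h1 hs hy

end Orbits

section Nonlinearity

/-- Nondecreasing `C¹` nonlinearities `g` that are strictly increasing between their fixed points
`0` and `1`, both of which are linearly stable. -/
structure IsStableNonlinearity (g : ℝ → ℝ) : Prop where
  contDiff : ContDiff ℝ 1 g
  monotone : Monotone g
  map_zero : g 0 = 0
  map_one : g 1 = 1
  deriv_pos : ∀ x ∈ Set.Ioo (0 : ℝ) 1, 0 < deriv g x
  deriv_zero_lt_one : deriv g 0 < 1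
  deriv_one_lt_one : deriv g 1 < 1

theorem eventually_forall_sub_le_mul_sub {f : ℝ → ℝ} (hf : ContDiff ℝ 1 f) {a μ : ℝ}
    (ha : deriv f a < μ) :
    ∀ᶠ ρ in 𝓝[>] 0, ∀ s ∈ Metric.closedBall a ρ, ∀ t ∈ Metric.closedBall a ρ, s ≤ t →
      f t - f s ≤ μ * (t - s) := by
  obtain ⟨ε, hε, hderiv⟩ := Metric.eventually_nhds_iff.1
    ((hf.continuous_deriv le_rfl).continuousAt.eventually (gt_mem_nhds ha))
  filter_upwards [Ioo_mem_nhdsGT hε] with ρ hρ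
  exact (convex_closedBall a ρ).image_sub_le_mul_sub_of_deriv_le hf.continuous.continuousOn
    (hf.differentiable one_ne_zero).differentiableOn
    fun x hx => (hderiv ((Metric.mem_closedBall.1 (interior_subset hx)).trans_lt hρ.2)).le

theorem exists_forall_sub_le_mul_sub {f : ℝ → ℝ} (hf : ContDiff ℝ 1 f) (a b : ℝ) :
    ∃ K > 0, ∀ s ∈ Set.Icc a b, ∀ t ∈ Set.Icc a b, s ≤ t → f t - f s ≤ K * (t - s) := by
  obtain ⟨K, hK⟩ := (isCompact_Icc (a := a) (b := b)).exists_bound_of_continuousOn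
    (hf.continuous_deriv le_rfl).continuousOn
  refine ⟨max K 1, by positivity, (convex_Icc a b).image_sub_le_mul_sub_of_deriv_le
    hf.continuous.continuousOn (hf.differentiable one_ne_zero).differentiableOn fun x hx => ?_⟩
  exact (le_abs_self _).trans ((hK x (interior_subset hx)).trans (le_max_left _ _))

namespace IsStableNonlinearity

variable {g : ℝ → ℝ}

theorem strictMonoOn (hg : IsStableNonlinearity g) : StrictMonoOn g (Set.Icc 0 1) :=
  strictMonoOn_of_deriv_pos (convex_Icc 0 1) hg.contDiff.continuous.continuousOn
    fun x hx => hg.deriv_pos x (interior_Icc (a := (0 : ℝ)) ▸ hx)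

theorem exists_contraction (hg : IsStableNonlinearity g) :
    ∃ μ ∈ Set.Ioo (0 : ℝ) 1, ∃ ρ ∈ Set.Ioo (0 : ℝ) 1, ∀ a ∈ ({0, 1} : Set ℝ),
      ∀ s ∈ Metric.closedBall a ρ, ∀ t ∈ Metric.closedBall a ρ, s ≤ t →
        g t - g s ≤ μ * (t - s) := by
  obtain ⟨μ, hμ, hμ1⟩ := exists_between
    (max_lt zero_lt_one (max_lt hg.deriv_zero_lt_one hg.deriv_one_lt_one))
  obtain ⟨hμ0, hμz, hμo⟩ := by simpa only [max_lt_iff] using hμ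
  obtain ⟨ρ, h0, h1, hρ⟩ := ((eventually_forall_sub_le_mul_sub hg.contDiff hμz).and
    ((eventually_forall_sub_le_mul_sub hg.contDiff hμo).and (Ioo_mem_nhdsGT one_pos))).exists
  exact ⟨μ, ⟨hμ0, hμ1⟩, ρ, hρ, by rintro a (rfl | rfl) <;> assumption⟩

theorem exists_map_lt (hg : IsStableNonlinearity g) : ∃ s ∈ Set.Ioo (0 : ℝ) 1, g s < s := by
  obtain ⟨μ, hμ, ρ, hρ, hle⟩ := hg.exists_contraction
  have h := hle 0 (by simp) 0 (by simpa using hρ.1.le) ρ (by simp [abs_of_pos hρ.1]) hρ.1.le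
  rw [hg.map_zero] at h
  exact ⟨ρ, hρ, by nlinarith [hμ.2, hρ.1]⟩

theorem exists_lt_map (hg : IsStableNonlinearity g) : ∃ s ∈ Set.Ioo (0 : ℝ) 1, s < g s := by
  obtain ⟨μ, hμ, ρ, hρ, hle⟩ := hg.exists_contraction
  have h := hle 1 (by simp) (1 - ρ) (by simp [abs_of_pos hρ.1]) 1
    (by simpa using hρ.1.le) (by linarith [hρ.1])
  rw [hg.map_one] at h
  exact ⟨1 - ρ, ⟨by linarith [hρ.2], by linarith [hρ.1]⟩, by nlinarith [hμ.2, hρ.1]⟩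

end IsStableNonlinearity

end Nonlinearity

section Wave

variable {g k φ : ℝ → ℝ}

/-- Travelling waves in the moving frame: nondecreasing `C¹` fixed points of `recursionOp g k`
connecting `0` to `1`. The speed is absorbed in the kernel `k`. -/
structure IsWave (g k φ : ℝ → ℝ) : Prop where
  monotone : Monotone φ
  contDiff : ContDiff ℝ 1 φ
  isFixedPt : Function.IsFixedPt (recursionOp g k) φ
  tendsto_atBot : Tendsto φ atBot (𝓝 0)
  tendsto_atTop : Tendsto φ atTop (𝓝 1)

namespace IsWave

theorem comp_add_right (hφ : IsWave g k φ) (b : ℝ) : IsWave g k fun x => φ (x + b) where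
  monotone _ _ h := hφ.monotone (add_le_add_left h b)
  contDiff := hφ.contDiff.comp (contDiff_id.add contDiff_const)
  isFixedPt := by rw [Function.IsFixedPt, recursionOp_comp_add_right, hφ.isFixedPt.eq]
  tendsto_atBot := hφ.tendsto_atBot.comp (tendsto_atBot_add_const_right _ b tendsto_id)
  tendsto_atTop := hφ.tendsto_atTop.comp (tendsto_atTop_add_const_right _ b tendsto_id)

theorem map_conv (hφ : IsWave g k φ) (x : ℝ) : g (conv k φ x) = φ x :=
  congrFun hφ.isFixedPt x

theorem continuous (hφ : IsWave g k φ) : Continuous φ := hφ.contDiff.continuous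

theorem nonneg (hφ : IsWave g k φ) (x : ℝ) : 0 ≤ φ x :=
  hφ.monotone.le_of_tendsto hφ.tendsto_atBot x

theorem le_one (hφ : IsWave g k φ) (x : ℝ) : φ x ≤ 1 :=
  hφ.monotone.ge_of_tendsto hφ.tendsto_atTop x

theorem abs_le_one (hφ : IsWave g k φ) (x : ℝ) : |φ x| ≤ 1 :=
  abs_le.2 ⟨by linarith [hφ.nonneg x], hφ.le_one x⟩

theorem boundedMeasurable (hφ : IsWave g k φ) : BoundedMeasurable φ :=
  ⟨hφ.continuous.measurable, 1, hφ.abs_le_one⟩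

theorem exists_apply_eq (hφ : IsWave g k φ) {t : ℝ} (ht : t ∈ Set.Ioo (0 : ℝ) 1) :
    ∃ x, φ x = t := by
  obtain ⟨a, ha⟩ := (hφ.tendsto_atBot.eventually_lt_const ht.1).exists
  obtain ⟨b, hb⟩ := (hφ.tendsto_atTop.eventually_const_lt ht.2).exists
  exact mem_range_of_exists_le_of_exists_ge hφ.continuous ⟨a, ha.le⟩ ⟨b, hb.le⟩

theorem tendsto_conv_atBot (hφ : IsWave g k φ) (hk : IsCompactDensity k) :
    Tendsto (conv k φ) atBot (𝓝 0) := by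
  simpa using tendsto_conv (x := id) hk.integrable hφ.continuous.measurable hφ.abs_le_one
    fun y => hφ.tendsto_atBot.comp (tendsto_atBot_add_const_right _ (-y) tendsto_id)

theorem tendsto_conv_atTop (hφ : IsWave g k φ) (hk : IsCompactDensity k) :
    Tendsto (conv k φ) atTop (𝓝 1) := by
  simpa [hk.integral_eq_one] using tendsto_conv (x := id) hk.integrable
    hφ.continuous.measurable hφ.abs_le_one
    fun y => hφ.tendsto_atTop.comp (tendsto_atTop_add_const_right _ (-y) tendsto_id)

/-- If the kernel moved mass in one direction only, `φ` and `k * φ` would be ordered, hence so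
would `φ` and `g ∘ φ`; but `g - id` changes sign. -/
theorem chargesBothSides (hφ : IsWave g k φ) (hk : IsCompactDensity k)
    (hg : IsStableNonlinearity g) : ChargesBothSides k := by
  have hforward : ∃ p > 0, 0 < k p := by
    by_contra! hcon
    obtain ⟨s, hs, hgs⟩ := hg.exists_lt_map
    obtain ⟨x, hx⟩ := hφ.exists_apply_eq hs
    have hle : conv k (fun _ => φ x) x ≤ conv k φ x :=
      conv_le_conv hk.integrable hk.nonneg (.const _) hφ.boundedMeasurable fun y hy =>
        hφ.monotone (by linarith [not_lt.1 fun h => hy (le_antisymm (hcon y h) (hk.nonneg y))])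
    rw [hk.conv_const, hx] at hle
    linarith [hg.monotone hle, hφ.map_conv x]
  have hbackward : ∃ r > 0, 0 < k (-r) := by
    by_contra! hcon
    obtain ⟨s, hs, hgs⟩ := hg.exists_map_lt
    obtain ⟨x, hx⟩ := hφ.exists_apply_eq hs
    have hle : conv k φ x ≤ conv k (fun _ => φ x) x :=
      conv_le_conv hk.integrable hk.nonneg hφ.boundedMeasurable (.const _) fun y hy =>
        hφ.monotone (by
          have : 0 ≤ y := not_lt.1 fun h => hy (le_antisymm
            (by simpa using hcon (-y) (neg_pos.2 h)) (hk.nonneg y))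
          linarith)
    rw [hk.conv_const, hx] at hle
    linarith [hg.monotone hle, hφ.map_conv x]
  obtain ⟨p, hp, hkp⟩ := hforward
  obtain ⟨r, hr, hkr⟩ := hbackward
  exact ⟨p, hp, r, hr, hkp, hkr⟩

theorem mem_Ioo (hφ : IsWave g k φ) (hk : IsCompactDensity k) (hg : IsStableNonlinearity g)
    (x : ℝ) : φ x ∈ Set.Ioo (0 : ℝ) 1 := by
  have hkc := hφ.chargesBothSides hk hg
  have hgc := hg.contDiff.continuous
  obtain ⟨z, hz⟩ := hφ.exists_apply_eq (t := 1 / 2) (by norm_num)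
  obtain ⟨n, hn⟩ := exists_iterate_recursionOp_lt hk hkc hg.monotone hgc hg.strictMonoOn
    hg.map_zero hg.map_one continuous_const hφ.continuous (fun _ => le_rfl) hφ.nonneg hφ.le_one
    (x₀ := z) (by norm_num [hz]) (Bornology.isBounded_singleton (x := x))
  obtain ⟨m, hm⟩ := exists_iterate_recursionOp_lt hk hkc hg.monotone hgc hg.strictMonoOn
    hg.map_zero hg.map_one hφ.continuous continuous_const hφ.nonneg hφ.le_one (fun _ => le_rfl)
    (x₀ := z) (by norm_num [hz]) (Bornology.isBounded_singleton (x := x))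
  have h0 := hn x rfl
  have h1 := hm x rfl
  rw [Function.iterate_fixed (recursionOp_const hk hg.map_zero),
    Function.iterate_fixed hφ.isFixedPt] at h0
  rw [Function.iterate_fixed (recursionOp_const hk hg.map_one),
    Function.iterate_fixed hφ.isFixedPt] at h1
  exact ⟨h0, h1⟩

theorem conv_mem_Icc (hφ : IsWave g k φ) (hk : IsCompactDensity k) (x : ℝ) :
    conv k φ x ∈ Set.Icc (0 : ℝ) 1 := by
  have h0 := hk.conv_mono (.const 0) hφ.boundedMeasurable hφ.nonneg x
  have h1 := hk.conv_mono hφ.boundedMeasurable (.const 1) hφ.le_one x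
  rw [hk.conv_const] at h0 h1
  exact ⟨h0, h1⟩

theorem conv_mem_Ioo (hφ : IsWave g k φ) (hk : IsCompactDensity k) (hg : IsStableNonlinearity g)
    (x : ℝ) : conv k φ x ∈ Set.Ioo (0 : ℝ) 1 := by
  have hx := hφ.map_conv x ▸ hφ.mem_Ioo hk hg x
  refine ⟨(hφ.conv_mem_Icc hk x).1.lt_of_ne' fun h => ?_,
    (hφ.conv_mem_Icc hk x).2.lt_of_ne fun h => ?_⟩
  · exact hx.1.ne' (h ▸ hg.map_zero)
  · exact hx.2.ne (h ▸ hg.map_one)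

theorem deriv_eq (hφ : IsWave g k φ) (hk : IsCompactDensity k) (hg : ContDiff ℝ 1 g) (x : ℝ) :
    deriv φ x = deriv g (conv k φ x) * conv k (deriv φ) x := by
  have h := (hg.differentiable one_ne_zero (conv k φ x)).hasDerivAt.comp x
    (hasDerivAt_conv hk.continuous hk.hasCompactSupport hφ.contDiff x)
  rw [← h.deriv]
  exact congrArg (deriv · x) hφ.isFixedPt.symm

theorem exists_deriv_pos (hφ : IsWave g k φ) : ∃ x, 0 < deriv φ x := by
  by_contra! hcon
  obtain ⟨a, ha⟩ := hφ.exists_apply_eq (t := 1 / 2) (by norm_num)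
  obtain ⟨b, hb⟩ := hφ.exists_apply_eq (t := 1 / 3) (by norm_num)
  have h := is_const_of_deriv_eq_zero (hφ.contDiff.differentiable one_ne_zero)
    (fun x => (hcon x).antisymm hφ.monotone.deriv_nonneg) a b
  norm_num [ha, hb] at h

theorem deriv_pos (hφ : IsWave g k φ) (hk : IsCompactDensity k) (hg : IsStableNonlinearity g)
    (x : ℝ) : 0 < deriv φ x := by
  obtain ⟨x₀, hx₀⟩ := hφ.exists_deriv_pos
  have hspread : ∀ y, 0 < deriv φ y → ∀ s, 0 < k s → 0 < deriv φ (y + s) := fun y hy s hs => by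
    rw [hφ.deriv_eq hk hg.contDiff]
    exact mul_pos (hg.deriv_pos _ (hφ.conv_mem_Ioo hk hg _))
      (conv_pos hk.continuous hk.hasCompactSupport hk.nonneg
        (hφ.contDiff.continuous_deriv le_rfl) (fun _ => hφ.monotone.deriv_nonneg) hs
        (by simpa using hy))
  obtain ⟨-, hn⟩ := (hφ.chargesBothSides hk hg).exists_subset (U := fun _ => {x | 0 < deriv φ x})
    hk.continuous (fun _ => hspread) hx₀ (Bornology.isBounded_singleton (x := x))
  exact hn rfl

theorem strictMono (hφ : IsWave g k φ) (hk : IsCompactDensity k) (hg : IsStableNonlinearity g) :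
    StrictMono φ :=
  strictMono_of_deriv_pos (hφ.deriv_pos hk hg)

theorem tendsto_deriv_of_tendsto (hφ : IsWave g k φ) (hk : IsCompactDensity k)
    (hg : ContDiff ℝ 1 g) {l : Filter ℝ} {c : ℝ} (hl : ∀ b, Tendsto (fun x => φ (x + b)) l (𝓝 c))
    (hconv : Tendsto (conv k φ) l (𝓝 c)) : Tendsto (deriv φ) l (𝓝 0) := by
  obtain ⟨Q, R, hQR⟩ := exists_conv_deriv_le hk.continuous hk.hasCompactSupport hφ.contDiff
    hφ.monotone
  have hzero : Tendsto (conv k (deriv φ)) l (𝓝 0) := by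
    refine squeeze_zero (fun x => integral_nonneg fun y =>
      mul_nonneg (hk.nonneg y) hφ.monotone.deriv_nonneg) hQR ?_
    simpa [sub_eq_add_neg] using ((hl R).sub (hl (-R))).const_mul Q
  have hmul := (((hg.continuous_deriv le_rfl).tendsto c).comp hconv).mul hzero
  rw [mul_zero] at hmul
  exact hmul.congr fun x => (hφ.deriv_eq hk hg x).symm

theorem tendsto_deriv_cocompact (hφ : IsWave g k φ) (hk : IsCompactDensity k)
    (hg : ContDiff ℝ 1 g) : Tendsto (deriv φ) (cocompact ℝ) (𝓝 0) := by
  rw [cocompact_eq_atBot_atTop]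
  exact (hφ.tendsto_deriv_of_tendsto hk hg (fun b => (hφ.comp_add_right b).tendsto_atBot)
    (hφ.tendsto_conv_atBot hk)).sup (hφ.tendsto_deriv_of_tendsto hk hg
    (fun b => (hφ.comp_add_right b).tendsto_atTop) (hφ.tendsto_conv_atTop hk))

end IsWave

end Wave

section Barriers

theorem exists_forall_mul_sub_le_sub {f : ℝ → ℝ} (hf : ContDiff ℝ 1 f) (hpos : ∀ x, 0 < deriv f x)
    {S : Set ℝ} (hS : IsCompact S) (r : ℝ) :
    ∃ c > 0, ∀ x ∈ S, ∀ a ∈ Metric.closedBall x r, ∀ b ∈ Metric.closedBall x r, a ≤ b →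
      c * (b - a) ≤ f b - f a := by
  obtain ⟨c, hc, hle⟩ := (hS.cthickening (r := r)).exists_forall_le'
    (hf.continuous_deriv le_rfl).continuousOn fun x _ => hpos x
  refine ⟨c, hc, fun x hx => (convex_closedBall x r).mul_sub_le_image_sub_of_le_deriv
    hf.continuous.continuousOn (hf.differentiable one_ne_zero).differentiableOn fun y hy => ?_⟩
  exact hle y (Metric.closedBall_subset_cthickening hx r (interior_subset hy))

variable {g k φ : ℝ → ℝ}

namespace IsWave

theorem eventually_conv_mem_closedBall (hφ : IsWave g k φ) (hk : IsCompactDensity k) {ρ : ℝ}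
    (hρ : 0 < ρ) :
    ∀ᶠ x in cocompact ℝ, ∃ a ∈ ({0, 1} : Set ℝ), conv k φ x ∈ Metric.closedBall a ρ := by
  rw [cocompact_eq_atBot_atTop, eventually_sup]
  constructor
  · filter_upwards [hφ.tendsto_conv_atBot hk (Metric.closedBall_mem_nhds 0 hρ)] with x hx
    exact ⟨0, by simp, hx⟩
  · filter_upwards [hφ.tendsto_conv_atTop hk (Metric.closedBall_mem_nhds 1 hρ)] with x hx
    exact ⟨1, by simp, hx⟩

/-- In the tails the stability of the end states gives the factor `μ < 1`; on the remaining compact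
set `φ' > 0`, so a large enough translation of `φ` absorbs the increment of `g`. -/
theorem exists_forall_map_sub_le (hφ : IsWave g k φ) (hk : IsCompactDensity k)
    (hg : IsStableNonlinearity g) :
    ∃ μ ∈ Set.Ioo (0 : ℝ) 1, ∃ σ > 0, ∃ δ > 0, ∀ x,
      ∀ s ∈ Metric.closedBall (conv k φ x) δ, ∀ t ∈ Metric.closedBall (conv k φ x) δ, s ≤ t →
      ∀ a ∈ Metric.closedBall x 1, a + σ * (t - s) ∈ Metric.closedBall x 1 →
        g t - g s ≤ μ * (t - s) + (φ (a + σ * (t - s)) - φ a) := by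
  obtain ⟨μ, hμ, ρ, hρ, hcontr⟩ := hg.exists_contraction
  obtain ⟨K, hK, hKle⟩ := exists_forall_sub_le_mul_sub hg.contDiff (-1) 2
  obtain ⟨S, hS, htail⟩ := mem_cocompact.1 (hφ.eventually_conv_mem_closedBall hk (half_pos hρ.1))
  obtain ⟨c, hc, hcle⟩ := exists_forall_mul_sub_le_sub hφ.contDiff (hφ.deriv_pos hk hg) hS 1
  refine ⟨μ, hμ, K / c, by positivity, ρ / 2, half_pos hρ.1, fun x s hs t ht hst a ha hb => ?_⟩
  have hshift : a ≤ a + K / c * (t - s) :=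
    le_add_of_nonneg_right (mul_nonneg (by positivity) (sub_nonneg.2 hst))
  by_cases hx : x ∈ S
  · have hIcc : Metric.closedBall (conv k φ x) (ρ / 2) ⊆ Set.Icc (-1) 2 := by
      obtain ⟨h0, h1⟩ := hφ.conv_mem_Icc hk x
      rw [Real.closedBall_eq_Icc]
      exact Set.Icc_subset_Icc (by linarith [hρ.2]) (by linarith [hρ.2])
    have hgain := hcle x hx a ha _ hb hshift
    rw [add_sub_cancel_left, ← mul_assoc, mul_div_cancel₀ _ hc.ne'] at hgain
    linarith [hKle s (hIcc hs) t (hIcc ht) hst, mul_nonneg hμ.1.le (sub_nonneg.2 hst)]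
  · obtain ⟨e, he, hxe⟩ := htail hx
    have hball : Metric.closedBall (conv k φ x) (ρ / 2) ⊆ Metric.closedBall e ρ :=
      Metric.closedBall_subset_closedBall' (by linarith [Metric.mem_closedBall.1 hxe])
    linarith [hcontr e he s (hball hs) t (hball ht) hst, hφ.monotone hshift]

theorem exists_forall_map_conv_add_le (hφ : IsWave g k φ) (hk : IsCompactDensity k)
    (hg : IsStableNonlinearity g) :
    ∃ μ ∈ Set.Ioo (0 : ℝ) 1, ∃ σ > 0, ∃ δ > 0, ∀ h ∈ Set.Icc 0 δ, ∀ x,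
      g (conv k φ x + h) ≤ φ (x + σ * h) + μ * h ∧
        φ (x - σ * h) - μ * h ≤ g (conv k φ x - h) := by
  obtain ⟨μ, hμ, σ, hσ, δ, hδ, hle⟩ := hφ.exists_forall_map_sub_le hk hg
  refine ⟨μ, hμ, σ, hσ, min δ σ⁻¹, by positivity, fun h hh x => ?_⟩
  have hhδ : |h| ≤ δ := (abs_of_nonneg hh.1).trans_le (hh.2.trans (min_le_left _ _))
  have hσh : |σ * h| ≤ 1 := by
    rw [abs_of_nonneg (mul_nonneg hσ.le hh.1), ← mul_inv_cancel₀ hσ.ne']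
    exact mul_le_mul_of_nonneg_left (hh.2.trans (min_le_right _ _)) hσ.le
  have hδ0 : (0 : ℝ) ≤ δ := hδ.le
  constructor
  · have := hle x (conv k φ x) (by simpa) (conv k φ x + h) (by simpa) (by linarith [hh.1]) x
      (by simp) (by simpa [abs_mul] using hσh)
    rw [add_sub_cancel_left, hφ.map_conv] at this
    linarith
  · have := hle x (conv k φ x - h) (by simpa) (conv k φ x) (by simpa) (by linarith [hh.1])
      (x - σ * h) (by simpa [abs_mul] using hσh) (by simp)
    rw [sub_sub_cancel, sub_add_cancel, hφ.map_conv] at this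
    linarith

end IsWave

/-- Quantitative stability of the wave `φ`: an error `β ≤ δ` in a one-sided bound of a state by a
translate of `φ` decays like `μ ^ n` along the orbit, at the price of a translation by at most
`τ * β`. -/
structure WaveStability (g k φ : ℝ → ℝ) (μ τ δ : ℝ) : Prop where
  rate_mem : μ ∈ Set.Ioo (0 : ℝ) 1
  cost_pos : 0 < τ
  size_pos : 0 < δ
  upper : ∀ {u : ℝ → ℝ}, BoundedMeasurable u → ∀ {b β : ℝ}, β ∈ Set.Icc 0 δ →
    (∀ x, u x ≤ φ (x + b) + β) →
      ∀ n x, (recursionOp g k)^[n] u x ≤ φ (x + (b + τ * β)) + β * μ ^ n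
  lower : ∀ {u : ℝ → ℝ}, BoundedMeasurable u → ∀ {b β : ℝ}, β ∈ Set.Icc 0 δ →
    (∀ x, φ (x + b) - β ≤ u x) →
      ∀ n x, φ (x + (b - τ * β)) - β * μ ^ n ≤ (recursionOp g k)^[n] u x

theorem recursionOp_comp_add_right_add (g : ℝ → ℝ) {u : ℝ → ℝ} (hk : IsCompactDensity k)
    (hu : BoundedMeasurable u) (b h x : ℝ) :
    recursionOp g k (fun y => u (y + b) + h) x = g (conv k u (x + b) + h) := by
  rw [recursionOp, hk.conv_add_const (hu.comp_add_right b), conv_comp_add_right]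

theorem iterate_recursionOp_le_of_forall_map_conv_le {μ τ δ : ℝ} (hφ : IsWave g k φ)
    (hk : IsCompactDensity k) (hgm : Monotone g) (hgc : Continuous g) (hμ : μ ∈ Set.Icc (0 : ℝ) 1)
    (hτ : 0 ≤ τ)
    (hle : ∀ h ∈ Set.Icc 0 δ, ∀ x, g (conv k φ x + h) ≤ φ (x + τ * (1 - μ) * h) + μ * h)
    {u : ℝ → ℝ} (hu : BoundedMeasurable u) {b β : ℝ} (hβ : β ∈ Set.Icc 0 δ)
    (h0 : ∀ x, u x ≤ φ (x + b) + β) (n : ℕ) (x : ℝ) :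
    (recursionOp g k)^[n] u x ≤ φ (x + (b + τ * β)) + β * μ ^ n := by
  have hshift : x + (b + τ * β * (1 - μ ^ n)) ≤ x + (b + τ * β) := by
    nlinarith [mul_nonneg (mul_nonneg hτ hβ.1) (pow_nonneg hμ.1 n)]
  have hcmp := seq_le_seq_of_recursionOp (a := fun n => (recursionOp g k)^[n] u)
    (b := fun n x => φ (x + (b + τ * β * (1 - μ ^ n))) + β * μ ^ n) hk hgm
    (hu.iterate_recursionOp hk hgc)
    (fun _ => (hφ.boundedMeasurable.comp_add_right _).add (.const _))
    (fun n x => (congrFun (Function.iterate_succ_apply' _ n u) x).le) (fun n x => ?_)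
    (by simpa using h0) n x
  · exact hcmp.trans (add_le_add_left (hφ.monotone hshift) _)
  · have hh : β * μ ^ n ∈ Set.Icc 0 δ := ⟨mul_nonneg hβ.1 (pow_nonneg hμ.1 n),
      (mul_le_of_le_one_right hβ.1 (pow_le_one₀ hμ.1 hμ.2)).trans hβ.2⟩
    rw [recursionOp_comp_add_right_add g hk hφ.boundedMeasurable]
    convert hle _ hh (x + (b + τ * β * (1 - μ ^ n))) using 2 <;> ring_nf

theorem le_iterate_recursionOp_of_forall_le_map_conv {μ τ δ : ℝ} (hφ : IsWave g k φ)
    (hk : IsCompactDensity k) (hgm : Monotone g) (hgc : Continuous g) (hμ : μ ∈ Set.Icc (0 : ℝ) 1)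
    (hτ : 0 ≤ τ)
    (hle : ∀ h ∈ Set.Icc 0 δ, ∀ x, φ (x - τ * (1 - μ) * h) - μ * h ≤ g (conv k φ x - h))
    {u : ℝ → ℝ} (hu : BoundedMeasurable u) {b β : ℝ} (hβ : β ∈ Set.Icc 0 δ)
    (h0 : ∀ x, φ (x + b) - β ≤ u x) (n : ℕ) (x : ℝ) :
    φ (x + (b - τ * β)) - β * μ ^ n ≤ (recursionOp g k)^[n] u x := by
  have hshift : x + (b - τ * β) ≤ x + (b - τ * β * (1 - μ ^ n)) := by
    nlinarith [mul_nonneg (mul_nonneg hτ hβ.1) (pow_nonneg hμ.1 n)]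
  have hcmp := seq_le_seq_of_recursionOp (b := fun n => (recursionOp g k)^[n] u)
    (a := fun n x => φ (x + (b - τ * β * (1 - μ ^ n))) + -(β * μ ^ n)) hk hgm
    (fun _ => (hφ.boundedMeasurable.comp_add_right _).add (.const _))
    (hu.iterate_recursionOp hk hgc)
    (fun n x => ?_) (fun n x => (congrFun (Function.iterate_succ_apply' _ n u) x).ge)
    (by simpa [sub_eq_add_neg] using h0) n x
  · refine le_trans ?_ hcmp
    rw [← sub_eq_add_neg]
    exact sub_le_sub_right (hφ.monotone hshift) _
  · have hh : β * μ ^ n ∈ Set.Icc 0 δ := ⟨mul_nonneg hβ.1 (pow_nonneg hμ.1 n),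
      (mul_le_of_le_one_right hβ.1 (pow_le_one₀ hμ.1 hμ.2)).trans hβ.2⟩
    rw [recursionOp_comp_add_right_add g hk hφ.boundedMeasurable]
    convert hle _ hh (x + (b - τ * β * (1 - μ ^ n))) using 2 <;> ring_nf

theorem IsWave.exists_waveStability (hφ : IsWave g k φ) (hk : IsCompactDensity k)
    (hg : IsStableNonlinearity g) : ∃ μ τ δ, WaveStability g k φ μ τ δ := by
  obtain ⟨μ, hμ, σ, hσ, δ, hδ, hle⟩ := hφ.exists_forall_map_conv_add_le hk hg
  have hμ' : 0 < 1 - μ := sub_pos.2 hμ.2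
  rw [← div_mul_cancel₀ σ hμ'.ne'] at hle
  have hτ : 0 < σ / (1 - μ) := div_pos hσ hμ'
  exact ⟨μ, σ / (1 - μ), δ, hμ, hτ, hδ,
    iterate_recursionOp_le_of_forall_map_conv_le hφ hk hg.monotone hg.contDiff.continuous
      ⟨hμ.1.le, hμ.2.le⟩ hτ.le fun h hh x => (hle h hh x).1,
    le_iterate_recursionOp_of_forall_le_map_conv hφ hk hg.monotone hg.contDiff.continuous
      ⟨hμ.1.le, hμ.2.le⟩ hτ.le fun h hh x => (hle h hh x).2⟩

end Barriers

section Compactness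

variable {X ι : Type*} [TopologicalSpace X]

theorem tendstoUniformlyOn_of_equicontinuous {F : Filter ι} {v : ι → X → ℝ} {w : X → ℝ}
    (hv : Equicontinuous v) (hw : ∀ x, Tendsto (fun i => v i x) F (𝓝 (w x))) {K : Set X}
    (hK : IsCompact K) : TendstoUniformlyOn v w F K := by
  have hAscoli := (EquicontinuousOn.tendsto_uniformOnFun_iff_pi (𝔖 := {K | IsCompact K})
    (fun K hK => hK) (Set.sUnion_eq_univ_iff.2 fun x => ⟨{x}, isCompact_singleton, rfl⟩)
    (fun K _ => hv.equicontinuousOn K) F w).2 (tendsto_pi_nhds.2 hw)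
  exact UniformOnFun.tendsto_iff_tendstoUniformlyOn.1 hAscoli K hK

theorem tendstoUniformly_of_equicontinuous_of_trapped {F : Filter ι} [F.NeBot]
    {v : ι → X → ℝ} {w lo hi : X → ℝ} {e : ι → ℝ} (hv : Equicontinuous v)
    (htrap : ∀ i x, lo x - e i ≤ v i x ∧ v i x ≤ hi x + e i) (he : Tendsto e F (𝓝 0))
    (hgap : Tendsto (fun x => hi x - lo x) (cocompact X) (𝓝 0))
    (hw : ∀ x, Tendsto (fun i => v i x) F (𝓝 (w x))) : TendstoUniformly v w F := by
  have hlo : ∀ x, lo x ≤ w x := fun x =>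
    le_of_tendsto_of_tendsto' (by simpa using he.const_sub (lo x)) (hw x) fun i => (htrap i x).1
  have hhi : ∀ x, w x ≤ hi x := fun x =>
    le_of_tendsto_of_tendsto' (hw x) (by simpa using he.const_add (hi x)) fun i => (htrap i x).2
  refine Metric.tendstoUniformly_iff.2 fun ε hε => ?_
  obtain ⟨K, hK, hKgap⟩ := mem_cocompact.1 (hgap.eventually_lt_const (half_pos hε))
  filter_upwards [he.eventually_lt_const (half_pos hε), Metric.tendstoUniformlyOn_iff.1
    (tendstoUniformlyOn_of_equicontinuous hv hw hK) ε hε] with i hei hvK x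
  by_cases hx : x ∈ K
  · exact hvK x hx
  · have hgapx : hi x - lo x < ε / 2 := hKgap hx
    rw [Real.dist_eq, abs_lt]
    constructor <;> linarith [htrap i x, hlo x, hhi x]

theorem exists_tendstoUniformly_of_trapped {F : Ultrafilter ι} {v : ι → X → ℝ} {lo hi : X → ℝ}
    {e : ι → ℝ} {C : ℝ} (hv : Equicontinuous v) (hC : ∀ i x, |v i x| ≤ C)
    (htrap : ∀ i x, lo x - e i ≤ v i x ∧ v i x ≤ hi x + e i) (he : Tendsto e F (𝓝 0))
    (hgap : Tendsto (fun x => hi x - lo x) (cocompact X) (𝓝 0)) :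
    ∃ w, TendstoUniformly v w (F : Filter ι) := by
  have hlim : ∀ x, ∃ y, Tendsto (fun i => v i x) F (𝓝 y) := fun x => by
    obtain ⟨y, -, hy⟩ := (isCompact_Icc (a := -C) (b := C)).ultrafilter_le_nhds
      (F.map fun i => v i x) (tendsto_principal.2 (.of_forall fun i => abs_le.1 (hC i x)))
    exact ⟨y, hy⟩
  choose w hw using hlim
  exact ⟨w, tendstoUniformly_of_equicontinuous_of_trapped hv htrap he hgap hw⟩

theorem exists_strictMono_tendsto_iSup_abs_sub {Y : Type*} {v : ℕ → Y → ℝ} {w : Y → ℝ}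
    {F : Filter ℕ} [F.NeBot] (hF : F ≤ atTop) (h : TendstoUniformly v w F) :
    ∃ nk : ℕ → ℕ, StrictMono nk ∧ Tendsto (fun j => ⨆ x, |v (nk j) x - w x|) atTop (𝓝 0) := by
  obtain ⟨nk, hnk, hclose⟩ := extraction_forall_of_frequently
    (P := fun j n => ∀ x, |v n x - w x| ≤ 1 / ((j : ℝ) + 1)) fun j =>
      Frequently.filter_mono (Eventually.frequently <| by
        filter_upwards [Metric.tendstoUniformly_iff.1 h (1 / ((j : ℝ) + 1)) (by positivity)]
          with n hn x
        simpa [Real.dist_eq, abs_sub_comm] using (hn x).le) hF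
  exact ⟨nk, hnk, squeeze_zero (fun j => Real.iSup_nonneg fun _ => abs_nonneg _)
    (fun j => Real.iSup_le (hclose j) (by positivity)) tendsto_one_div_add_atTop_nhds_zero_nat⟩

end Compactness

section OmegaLimit

variable {g k φ u₀ w : ℝ → ℝ}

theorem IsWave.tendsto_comp_add_sub_cocompact (hφ : IsWave g k φ) (a b : ℝ) :
    Tendsto (fun x => φ (x + b) - φ (x + a)) (cocompact ℝ) (𝓝 0) := by
  rw [cocompact_eq_atBot_atTop]
  have hbot := (hφ.comp_add_right b).tendsto_atBot.sub (hφ.comp_add_right a).tendsto_atBot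
  have htop := (hφ.comp_add_right b).tendsto_atTop.sub (hφ.comp_add_right a).tendsto_atTop
  rw [sub_self] at hbot htop
  exact hbot.sup htop

theorem IsWave.exists_tendstoUniformly_iterate (hφ : IsWave g k φ) (hk : IsCompactDensity k)
    (hg : Continuous g) (hu₀ : BoundedMeasurable u₀) {a b : ℝ} {e : ℕ → ℝ}
    (he : Tendsto e atTop (𝓝 0)) (htrap : ∀ n x, φ (x + a) - e n ≤ (recursionOp g k)^[n] u₀ x ∧
      (recursionOp g k)^[n] u₀ x ≤ φ (x + b) + e n) :
    ∃ F : Filter ℕ, F.NeBot ∧ F ≤ atTop ∧ ∃ w, Continuous w ∧ (∀ x, 0 ≤ w x) ∧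
      TendstoUniformly (fun n => (recursionOp g k)^[n] u₀) w F := by
  obtain ⟨E, hE⟩ := he.bddAbove_range
  have hbound : ∀ n x, |(recursionOp g k)^[n] u₀ x| ≤ 1 + E := fun n x => by
    have hEn := hE (Set.mem_range_self n)
    rw [abs_le]
    constructor <;> linarith [htrap n x, hφ.nonneg (x + a), hφ.le_one (x + b)]
  have hequi : UniformEquicontinuous fun n => (recursionOp g k)^[n + 1] u₀ := by
    simpa only [Function.iterate_succ_apply'] using uniformEquicontinuous_recursionOp hk hg
      (fun n => (hu₀.iterate_recursionOp hk hg n).measurable) hbound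
  have hF : ↑(hyperfilter ℕ) ≤ (atTop : Filter ℕ) := Nat.hyperfilter_le_atTop
  obtain ⟨w, hw⟩ := exists_tendstoUniformly_of_trapped (F := hyperfilter ℕ) hequi.equicontinuous
    (fun n => hbound (n + 1)) (fun n => htrap (n + 1))
    (((tendsto_add_atTop_iff_nat 1).2 he).mono_left hF) (hφ.tendsto_comp_add_sub_cocompact a b)
  refine ⟨map (· + 1) ↑(hyperfilter ℕ), inferInstance, (tendsto_add_atTop_nat 1).mono_left hF, w,
    hw.continuous (.of_forall fun n => (hequi.uniformContinuous n).continuous), ?_, hw⟩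
  exact fun x => le_of_tendsto_of_tendsto'
    (by simpa using (((tendsto_add_atTop_iff_nat 1).2 he).mono_left hF).neg) (hw.tendsto_at x)
    fun n => by linarith [htrap (n + 1) x, hφ.nonneg (x + a)]

theorem le_comp_sub_add_of_forall_deriv_le (hφ : ContDiff ℝ 1 φ) {D x e : ℝ} (he : 0 ≤ e)
    (hD : ∀ y ∈ Set.Icc (x - e) x, deriv φ y ≤ D) : φ x ≤ φ (x - e) + D * e := by
  have h := (convex_Icc (x - e) x).image_sub_le_mul_sub_of_deriv_le hφ.continuous.continuousOn
    (hφ.differentiable one_ne_zero).differentiableOn (fun y hy => hD y (interior_subset hy))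
    (x - e) ⟨le_rfl, by linarith⟩ x ⟨by linarith, le_rfl⟩ (by linarith)
  linarith

theorem exists_isCompact_eventually_le_comp_sub_add (hφ : ContDiff ℝ 1 φ)
    (hφ' : Tendsto (deriv φ) (cocompact ℝ) (𝓝 0)) {η : ℝ} (hη : 0 < η) :
    ∃ K : Set ℝ, IsCompact K ∧ ∀ w, Continuous w → (∀ x, w x ≤ φ x) → (∀ x ∈ K, w x < φ x) →
      ∀ᶠ e in 𝓝[>] 0, ∀ x, w x ≤ φ (x - e) + η * e := by
  obtain ⟨S, hS, hSη⟩ := mem_cocompact.1 (hφ'.eventually_lt_const hη)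
  have hK : IsCompact (Metric.cthickening 1 S) := hS.cthickening
  refine ⟨Metric.cthickening 1 S, hK, fun w hw hle hlt => ?_⟩
  obtain ⟨m, hm, hgap⟩ := hK.exists_forall_le' (f := fun x => φ x - w x)
    (hφ.continuous.sub hw).continuousOn fun x hx => sub_pos.2 (hlt x hx)
  obtain ⟨D, hD⟩ := (hK.cthickening (r := 1)).exists_bound_of_continuousOn
    (hφ.continuous_deriv le_rfl).continuousOn
  have hsmall : ∀ᶠ e in 𝓝[>] (0 : ℝ), D * e < m := by
    have : Tendsto (fun e => D * e) (𝓝 0) (𝓝 (D * 0)) := tendsto_id.const_mul D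
    rw [mul_zero] at this
    exact (this.eventually_lt_const hm).filter_mono nhdsWithin_le_nhds
  filter_upwards [Ioo_mem_nhdsGT one_pos, hsmall] with e he hDe x
  have hdist : ∀ y ∈ Set.Icc (x - e) x, dist x y ≤ 1 := fun y hy => by
    rw [Real.dist_eq, abs_le]
    constructor <;> linarith [hy.1, hy.2, he.2]
  by_cases hx : x ∈ Metric.cthickening 1 S
  · have hback := le_comp_sub_add_of_forall_deriv_le hφ he.1.le fun y hy =>
      (le_abs_self _).trans (hD y (Metric.mem_cthickening_of_dist_le y x 1 _ hx
        (dist_comm x y ▸ hdist y hy)))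
    linarith [hgap x hx, mul_pos hη he.1]
  · exact (hle x).trans (le_comp_sub_add_of_forall_deriv_le hφ he.1.le fun y hy => le_of_lt <|
      hSη fun hyS => hx (Metric.mem_cthickening_of_dist_le x y 1 S hyS (hdist y hy)))

/-- The shifts of `φ` that dominate the sequence `v` asymptotically. -/
def asymptoticUpperShifts (φ : ℝ → ℝ) (v : ℕ → ℝ → ℝ) : Set ℝ :=
  {b | ∀ ε > 0, ∀ᶠ n in atTop, ∀ x, v n x ≤ φ (x + b) + ε}

theorem le_of_mem_asymptoticUpperShifts {v : ℕ → ℝ → ℝ} {a b : ℝ} {e : ℕ → ℝ} (hφ : StrictMono φ)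
    (he : Tendsto e atTop (𝓝 0)) (hlow : ∀ n x, φ (x + a) - e n ≤ v n x)
    (hb : b ∈ asymptoticUpperShifts φ v) : a ≤ b := by
  have hle : φ (0 + a) ≤ φ (0 + b) := le_of_forall_pos_le_add fun ε hε => by
    obtain ⟨n, hn, hen⟩ :=
      ((hb (ε / 2) (half_pos hε)).and (he.eventually_lt_const (half_pos hε))).exists
    linarith [hlow n 0, hn 0]
  simpa using hφ.le_iff_le.1 hle

theorem le_of_tendsto_of_mem_asymptoticUpperShifts {v : ℕ → ℝ → ℝ} {F : Filter ℕ}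
    [F.NeBot] {b : ℝ} (hF : F ≤ atTop) (hw : ∀ x, Tendsto (fun n => v n x) F (𝓝 (w x)))
    (hb : b ∈ asymptoticUpperShifts φ v) (x : ℝ) : w x ≤ φ (x + b) :=
  le_of_forall_pos_le_add fun ε hε =>
    le_of_tendsto (hw x) ((Eventually.filter_mono hF (hb ε hε)).mono fun _ hn => hn x)

theorem le_comp_add_sInf_asymptoticUpperShifts {v : ℕ → ℝ → ℝ} {F : Filter ℕ} [F.NeBot]
    (hφ : Continuous φ) (hF : F ≤ atTop) (hw : ∀ x, Tendsto (fun n => v n x) F (𝓝 (w x)))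
    (hne : (asymptoticUpperShifts φ v).Nonempty) (hbdd : BddBelow (asymptoticUpperShifts φ v))
    (x : ℝ) : w x ≤ φ (x + sInf (asymptoticUpperShifts φ v)) :=
  (isClosed_le continuous_const (by fun_prop : Continuous fun b => φ (x + b))).closure_subset_iff.2
    (fun _ hb => le_of_tendsto_of_mem_asymptoticUpperShifts hF hw hb x)
    (csInf_mem_closure hne hbdd)

theorem WaveStability.mem_asymptoticUpperShifts {μ τ δ b β : ℝ} (hs : WaveStability g k φ μ τ δ)
    (hk : IsCompactDensity k) (hg : Continuous g) (hu₀ : BoundedMeasurable u₀)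
    (hβ : β ∈ Set.Icc 0 δ) {N : ℕ} (hN : ∀ x, (recursionOp g k)^[N] u₀ x ≤ φ (x + b) + β) :
    b + τ * β ∈ asymptoticUpperShifts φ fun n => (recursionOp g k)^[n] u₀ := by
  intro ε hε
  have hdecay : Tendsto (fun n => β * μ ^ n) atTop (𝓝 0) := by
    simpa using (tendsto_pow_atTop_nhds_zero_of_lt_one hs.rate_mem.1.le hs.rate_mem.2).const_mul β
  rw [← map_add_atTop_eq_nat N, eventually_map]
  filter_upwards [hdecay.eventually_lt_const hε] with n hn x
  rw [Function.iterate_add_apply]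
  linarith [hs.upper (hu₀.iterate_recursionOp hk hg N) hβ hN n x]

/-- A limit lying strictly below `φ(· + B)` somewhere is pushed strictly below it on a large compact
set, and there the wave can be moved back by `e` for free. In the tails, where `φ'` is small, moving
back by `e` costs an error `e / (4τ)`, and absorbing it costs a shift of order `e / 2` only. -/
theorem IsWave.exists_lt_mem_asymptoticUpperShifts {μ τ δ B x₀ : ℝ} {F : Filter ℕ} [F.NeBot]
    (hφ : IsWave g k φ) (hk : IsCompactDensity k) (hg : IsStableNonlinearity g)
    (hs : WaveStability g k φ μ τ δ) (hu₀ : BoundedMeasurable u₀)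
    (hF : TendstoUniformly (fun n => (recursionOp g k)^[n] u₀) w F) (hwc : Continuous w)
    (hw0 : ∀ x, 0 ≤ w x) (hwB : ∀ x, w x ≤ φ (x + B)) (hx₀ : w x₀ < φ (x₀ + B)) :
    ∃ b ∈ asymptoticUpperShifts φ fun n => (recursionOp g k)^[n] u₀, b < B := by
  have hφB := hφ.comp_add_right B
  have hgc := hg.contDiff.continuous
  have hτ := hs.cost_pos
  have hbw : BoundedMeasurable w :=
    .of_le_of_le (.const 0) hφB.boundedMeasurable hwc.measurable fun x => ⟨hw0 x, hwB x⟩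
  obtain ⟨K, hK, hback⟩ := exists_isCompact_eventually_le_comp_sub_add hφB.contDiff
    (hφB.tendsto_deriv_cocompact hk hg.contDiff) (η := 1 / (4 * τ)) (by positivity)
  obtain ⟨n, hn⟩ := exists_iterate_recursionOp_lt hk (hφ.chargesBothSides hk hg) hg.monotone hgc
    hg.strictMonoOn hg.map_zero hg.map_one hwc hφB.continuous hw0 hwB hφB.le_one hx₀ hK.isBounded
  have hle := iterate_recursionOp_mono hk hg.monotone hgc hbw hφB.boundedMeasurable hwB n
  rw [Function.iterate_fixed hφB.isFixedPt] at hn hle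
  obtain ⟨e, hbacke, he, heδ⟩ := ((hback _ (continuous_iterate_recursionOp hk hgc hwc hbw n) hle
    hn).and (Ioo_mem_nhdsGT (mul_pos (mul_pos two_pos hτ) hs.size_pos))).exists
  have hη : 0 < 1 / (4 * τ) * e := by positivity
  obtain ⟨m, hm⟩ := (Metric.tendstoUniformly_iff.1 (tendstoUniformly_iterate_recursionOp hk hgc
    (hu₀.iterate_recursionOp hk hgc) hbw hF n) _ hη).exists
  have hupper : ∀ x, (recursionOp g k)^[n + m] u₀ x ≤ φ (x + (B - e)) + e / (2 * τ) := fun x => by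
    have hsum : 1 / (4 * τ) * e + 1 / (4 * τ) * e = e / (2 * τ) := by field_simp; ring
    have hclose := (abs_lt.1 (hm x)).1
    rw [← Function.iterate_add_apply] at hclose
    have hshift := hbacke x
    rw [sub_add_eq_add_sub, add_sub_assoc] at hshift
    linarith
  refine ⟨_, hs.mem_asymptoticUpperShifts hk hgc hu₀ ⟨by positivity, ?_⟩ hupper, ?_⟩
  · rw [div_le_iff₀ (by positivity)]
    linarith
  · have hcost : τ * (e / (2 * τ)) = e / 2 := by field_simp
    linarith

theorem IsWave.eq_comp_add_sInf_asymptoticUpperShifts {μ τ δ : ℝ} {F : Filter ℕ} [F.NeBot]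
    (hφ : IsWave g k φ) (hk : IsCompactDensity k) (hg : IsStableNonlinearity g)
    (hs : WaveStability g k φ μ τ δ) (hu₀ : BoundedMeasurable u₀) (hFtop : F ≤ atTop)
    (hF : TendstoUniformly (fun n => (recursionOp g k)^[n] u₀) w F) (hwc : Continuous w)
    (hw0 : ∀ x, 0 ≤ w x)
    (hne : (asymptoticUpperShifts φ fun n => (recursionOp g k)^[n] u₀).Nonempty)
    (hbdd : BddBelow (asymptoticUpperShifts φ fun n => (recursionOp g k)^[n] u₀)) (x : ℝ) :
    w x = φ (x + sInf (asymptoticUpperShifts φ fun n => (recursionOp g k)^[n] u₀)) := by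
  have hle := le_comp_add_sInf_asymptoticUpperShifts hφ.continuous hFtop
    (fun x => hF.tendsto_at x) hne hbdd
  refine (hle x).eq_of_not_lt fun hlt => ?_
  obtain ⟨b, hb, hlt⟩ := hφ.exists_lt_mem_asymptoticUpperShifts hk hg hs hu₀ hF hwc hw0 hle hlt
  exact hlt.not_ge (csInf_le hbdd hb)

theorem IsWave.exists_tendsto_iSup_abs_iterate_sub {μ τ δ a b β : ℝ}
    (hφ : IsWave g k φ) (hk : IsCompactDensity k) (hg : IsStableNonlinearity g)
    (hs : WaveStability g k φ μ τ δ) (hβ : β ∈ Set.Icc 0 δ) (hu₀ : Measurable u₀)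
    (htrap : ∀ x, φ (x + a) - β ≤ u₀ x ∧ u₀ x ≤ φ (x + b) + β) :
    ∃ (ξ : ℝ) (nk : ℕ → ℕ), StrictMono nk ∧
      Tendsto (fun j => ⨆ x, |(recursionOp g k)^[nk j] u₀ x - φ (x + ξ)|) atTop (𝓝 0) := by
  have hbu : BoundedMeasurable u₀ := .of_le_of_le
    ((hφ.comp_add_right a).boundedMeasurable.add (.const (-β)))
    ((hφ.comp_add_right b).boundedMeasurable.add (.const β)) hu₀ htrap
  have hdecay : Tendsto (fun n => β * μ ^ n) atTop (𝓝 0) := by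
    simpa using (tendsto_pow_atTop_nhds_zero_of_lt_one hs.rate_mem.1.le hs.rate_mem.2).const_mul β
  have hlower := hs.lower hbu hβ fun x => (htrap x).1
  have hupper := hs.upper hbu hβ fun x => (htrap x).2
  obtain ⟨F, _, hFtop, w, hwc, hw0, hw⟩ := hφ.exists_tendstoUniformly_iterate hk
    hg.contDiff.continuous hbu hdecay fun n x => ⟨hlower n x, hupper n x⟩
  have hw_eq := hφ.eq_comp_add_sInf_asymptoticUpperShifts hk hg hs hbu hFtop hw hwc hw0
    ⟨_, hs.mem_asymptoticUpperShifts hk hg.contDiff.continuous hbu hβ (N := 0)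
      fun x => (htrap x).2⟩
    ⟨_, fun _ => le_of_mem_asymptoticUpperShifts (hφ.strictMono hk hg) hdecay hlower⟩
  obtain ⟨nk, hnk, hlim⟩ := exists_strictMono_tendsto_iSup_abs_sub hFtop hw
  exact ⟨_, nk, hnk, by simpa only [hw_eq] using hlim⟩

end OmegaLimit

section Setting

namespace BistableSetting

variable (S : BistableSetting)

theorem g_of_nonpos {x : ℝ} (hx : x ≤ 0) :
    S.g x = (Polynomial.derivative S.P).eval 0 * x := by
  rcases hx.lt_or_eq with h | rfl
  · rw [g, if_pos h]
  · simp [g, S.hP0]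

theorem g_of_mem_Icc {x : ℝ} (hx : x ∈ Set.Icc (0 : ℝ) 1) : S.g x = S.P.eval x := by
  rw [g, if_neg hx.1.not_gt, if_pos hx.2]

theorem g_of_one_le {x : ℝ} (hx : 1 ≤ x) :
    S.g x = 1 + (Polynomial.derivative S.P).eval 1 * (x - 1) := by
  rcases hx.lt_or_eq with h | rfl
  · rw [g, if_neg (by linarith), if_neg h.not_ge]
  · simp [g, S.hP1]

/-- The derivative of `g`, in a form that is visibly continuous: `P'` at the point of `[0,1]`
closest to `x`. -/
noncomputable def clampedDeriv (x : ℝ) : ℝ :=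
  (Polynomial.derivative S.P).eval (Set.projIcc 0 1 zero_le_one x : ℝ)

theorem continuous_clampedDeriv : Continuous S.clampedDeriv :=
  (Polynomial.derivative S.P).continuous.comp (continuous_subtype_val.comp continuous_projIcc)

theorem clampedDeriv_of_nonpos {x : ℝ} (hx : x ≤ 0) :
    S.clampedDeriv x = (Polynomial.derivative S.P).eval 0 := by
  rw [clampedDeriv, Set.projIcc_of_le_left _ hx]

theorem clampedDeriv_of_mem_Icc {x : ℝ} (hx : x ∈ Set.Icc (0 : ℝ) 1) :
    S.clampedDeriv x = (Polynomial.derivative S.P).eval x := by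
  rw [clampedDeriv, Set.projIcc_of_mem _ hx]

theorem clampedDeriv_of_one_le {x : ℝ} (hx : 1 ≤ x) :
    S.clampedDeriv x = (Polynomial.derivative S.P).eval 1 := by
  rw [clampedDeriv, Set.projIcc_of_right_le _ hx]

theorem hasDerivWithinAt_g_Iic {x : ℝ} (hx : x ≤ 0) :
    HasDerivWithinAt S.g (S.clampedDeriv x) (Set.Iic 0) x := by
  rw [S.clampedDeriv_of_nonpos hx]
  exact (hasDerivAt_const_mul _).hasDerivWithinAt.congr (fun _ => S.g_of_nonpos) (S.g_of_nonpos hx)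

theorem hasDerivWithinAt_g_Icc {x : ℝ} (hx : x ∈ Set.Icc (0 : ℝ) 1) :
    HasDerivWithinAt S.g (S.clampedDeriv x) (Set.Icc 0 1) x := by
  rw [S.clampedDeriv_of_mem_Icc hx]
  exact (S.P.hasDerivAt x).hasDerivWithinAt.congr (fun _ => S.g_of_mem_Icc) (S.g_of_mem_Icc hx)

theorem hasDerivWithinAt_g_Ici {x : ℝ} (hx : 1 ≤ x) :
    HasDerivWithinAt S.g (S.clampedDeriv x) (Set.Ici 1) x := by
  rw [S.clampedDeriv_of_one_le hx]
  have h : HasDerivAt (fun y => 1 + (Polynomial.derivative S.P).eval 1 * (y - 1))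
      ((Polynomial.derivative S.P).eval 1) x := by
    simpa using (((hasDerivAt_id x).sub_const 1).const_mul _).const_add 1
  exact h.hasDerivWithinAt.congr (fun _ => S.g_of_one_le) (S.g_of_one_le hx)

theorem hasDerivAt_g_s19 (x : ℝ) : HasDerivAt S.g (S.clampedDeriv x) x := by
  rcases lt_trichotomy x 0 with hx | rfl | hx
  · exact (S.hasDerivWithinAt_g_Iic hx.le).hasDerivAt (Iic_mem_nhds hx)
  · have h := (S.hasDerivWithinAt_g_Iic le_rfl).union
      (S.hasDerivWithinAt_g_Icc (Set.left_mem_Icc.2 zero_le_one))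
    rw [Set.Iic_union_Icc_eq_Iic zero_le_one] at h
    exact h.hasDerivAt (Iic_mem_nhds one_pos)
  rcases lt_trichotomy x 1 with hx1 | rfl | hx1
  · exact (S.hasDerivWithinAt_g_Icc ⟨hx.le, hx1.le⟩).hasDerivAt (Icc_mem_nhds hx hx1)
  · have h := (S.hasDerivWithinAt_g_Icc (Set.right_mem_Icc.2 zero_le_one)).union
      (S.hasDerivWithinAt_g_Ici le_rfl)
    rw [Set.Icc_union_Ici_eq_Ici zero_le_one] at h
    exact h.hasDerivAt (Ici_mem_nhds one_pos)
  · exact (S.hasDerivWithinAt_g_Ici hx1.le).hasDerivAt (Ici_mem_nhds hx1)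

theorem deriv_g_s19 : deriv S.g = S.clampedDeriv := deriv_eq S.hasDerivAt_g_s19

theorem clampedDeriv_nonneg (x : ℝ) : 0 ≤ S.clampedDeriv x := by
  have hclosed : IsClosed {t | 0 ≤ (Polynomial.derivative S.P).eval t} :=
    isClosed_le continuous_const (Polynomial.derivative S.P).continuous
  have hsubset := hclosed.closure_subset_iff.2 fun t ht => (S.hP_mono t ht).le
  rw [closure_Ioo zero_ne_one] at hsubset
  exact hsubset (Set.projIcc 0 1 zero_le_one x).2

theorem isStableNonlinearity_g : IsStableNonlinearity S.g where
  contDiff := contDiff_one_iff_deriv.2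
    ⟨fun x => (S.hasDerivAt_g_s19 x).differentiableAt, S.deriv_g_s19 ▸ S.continuous_clampedDeriv⟩
  monotone := monotone_of_hasDerivAt_nonneg S.hasDerivAt_g_s19 S.clampedDeriv_nonneg
  map_zero := by simp [S.g_of_nonpos le_rfl]
  map_one := by simp [S.g_of_one_le le_rfl]
  deriv_pos x hx := by
    rw [deriv_g_s19, S.clampedDeriv_of_mem_Icc (Set.Ioo_subset_Icc_self hx)]
    exact S.hP_mono x hx
  deriv_zero_lt_one := by
    rw [deriv_g_s19, S.clampedDeriv_of_nonpos le_rfl]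
    exact S.hf'0
  deriv_one_lt_one := by
    rw [deriv_g_s19, S.clampedDeriv_of_one_le le_rfl]
    exact S.hf'1

theorem isCompactDensity_qshift (ℓ : ℝ) : IsCompactDensity (qshift S.q ℓ) where
  continuous := S.hq_diff.continuous.comp (continuous_add_const ℓ)
  hasCompactSupport := S.hq_supp.comp_homeomorph (Homeomorph.addRight ℓ)
  nonneg _ := S.hq_nonneg _
  integral_eq_one := (integral_add_right_eq_self S.q ℓ).trans S.hq_int

end BistableSetting

theorem IsTravelingWave.isWave {S : BistableSetting} {ℓ : ℝ} {φ : ℝ → ℝ}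
    (h : IsTravelingWave S ℓ φ) : IsWave S.g (qshift S.q ℓ) φ where
  monotone := h.mono
  contDiff := h.smooth
  isFixedPt := funext fun x => (h.wave_eq x).symm
  tendsto_atBot := h.limit_bot
  tendsto_atTop := h.limit_top

end Setting

theorem omega_limit_contains_wave_general {g k φ : ℝ → ℝ} (hk : IsCompactDensity k)
    (hg : IsStableNonlinearity g) (hφ : IsWave g k φ) :
    ∃ δ₀ > (0 : ℝ), ∀ (ξm ξp β₀ : ℝ) (u : ℕ → ℝ → ℝ), 0 ≤ β₀ → β₀ ≤ δ₀ → Measurable (u 0) →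
      (∀ n x, u (n + 1) x = recursionOp g k (u n) x) →
      (∀ x, φ (x + ξm) - β₀ ≤ u 0 x ∧ u 0 x ≤ φ (x + ξp) + β₀) →
      ∃ (ξbar : ℝ) (nk : ℕ → ℕ), StrictMono nk ∧
        Tendsto (fun j => ⨆ x, |u (nk j) x - φ (x + ξbar)|) atTop (𝓝 0) := by
  obtain ⟨μ, τ, δ, hs⟩ := hφ.exists_waveStability hk hg
  refine ⟨δ, hs.size_pos, fun ξm ξp β₀ u hβ₀ hβδ hu₀ hrec htrap => ?_⟩
  rw [funext (eq_iterate_recursionOp hrec)]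
  exact hφ.exists_tendsto_iSup_abs_iterate_sub hk hg hs ⟨hβ₀, hβδ⟩ hu₀ htrap

/-- The ω-limit set of the bistable recursion in the moving frame contains a shift of the
traveling wave: if the initial condition is trapped between shifts of the wave up to a
small error `β₀ ≤ δ₀`, then along a subsequence the solution converges uniformly to a
shift of the wave. -/
theorem omega_limit_contains_wave (S : BistableSetting) (ℓ : ℝ) (φ : ℝ → ℝ)
    (h : IsTravelingWave S ℓ φ) :
    ∃ δ₀ > (0 : ℝ), ∀ (ξm ξp β₀ : ℝ) (u : ℕ → ℝ → ℝ),
      0 ≤ β₀ → β₀ ≤ δ₀ →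
      (∀ n, Measurable (u n)) → (∀ n, ∃ C, ∀ x, |u n x| ≤ C) →
      (∀ (n : ℕ) (x : ℝ), u (n + 1) x = S.g (conv (qshift S.q ℓ) (u n) x)) →
      (∀ x : ℝ, φ (x + ξm) - β₀ ≤ u 0 x ∧ u 0 x ≤ φ (x + ξp) + β₀) →
      ∃ (ξbar : ℝ) (nk : ℕ → ℕ), StrictMono nk ∧
        Tendsto (fun k : ℕ => ⨆ x : ℝ, |u (nk k) x - φ (x + ξbar)|) atTop (𝓝 0) := by
  obtain ⟨δ₀, hδ₀, hlim⟩ := omega_limit_contains_wave_general (S.isCompactDensity_qshift ℓ)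
    S.isStableNonlinearity_g h.isWave
  exact ⟨δ₀, hδ₀, fun ξm ξp β₀ u hβ₀ hβδ hu _ => hlim ξm ξp β₀ u hβ₀ hβδ (hu 0)⟩
end
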